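/- Let a₁, a₂ ≠ 0 be real numbers whose ratio satisfies a₂/a₁ < 0 or a₂/a₁ > 4, and let s > −3/4. Then there exist b ∈ (1/2, 1), ε > 0 and C > 0, depending only on s, b and b', such that for all σ ≥ 0, all b' ∈ [b, b+ε), and all Schwartz functions f, g on ℝ²: ‖f · ∂_x g‖_{X_{a₂}^{σ,s,b'−1}} ≤ C ‖f‖_{X_{a₂}^{σ,s,b}} ‖g‖_{X_{a₁}^{σ,s,b}}. -/

import Mathlib

open MeasureTheory Set Filter
open scoped ENNReal

/-- Space-time Fourier transform `f̂(τ,ξ) = ∫∫ e^{-i(tτ + xξ)} f(t,x) dt dx`. -/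
noncomputable def FT2 (f : ℝ → ℝ → ℂ) (τ ξ : ℝ) : ℂ :=
  ∫ t : ℝ, ∫ x : ℝ, Complex.exp (-Complex.I * (t * τ + x * ξ)) * f t x

/-- Gevrey–Bourgain norm `‖f‖_{X_a^{σ,s,b}}`, valued in `ℝ≥0∞`. -/
noncomputable def XNorm (a σ s b : ℝ) (f : ℝ → ℝ → ℂ) : ℝ≥0∞ :=
  (∫⁻ τ : ℝ, ∫⁻ ξ : ℝ, ENNReal.ofReal
      (Real.exp (2 * σ * |ξ|) * (1 + |ξ|) ^ (2 * s) *
        (1 + |τ - a * ξ ^ 3|) ^ (2 * b) * ‖FT2 f τ ξ‖ ^ 2)) ^ (1/2 : ℝ)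


open FourierTransform in
lemma FT2_eq (F : SchwartzMap ℂ ℂ) (τ ξ : ℝ) :
    FT2 (fun t x => F (Complex.equivRealProdCLM.symm (t, x))) τ ξ =
      (𝓕⁻ F) ((-(2 * Real.pi)⁻¹ : ℝ) • Complex.equivRealProdCLM.symm (τ, ξ)) := by
  have hπ : (2 * Real.pi) ≠ 0 := by positivity
  rw [SchwartzMap.fourierInv_coe, Real.fourierInv_eq']
  have key : ∀ v : ℂ, Complex.exp (((2 * Real.pi * inner ℝ v ((-(2 * Real.pi)⁻¹ : ℝ) • Complex.equivRealProdCLM.symm (τ, ξ)) : ℝ) : ℂ) * Complex.I) • F v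
      = Complex.exp (-Complex.I * (v.re * τ + v.im * ξ)) * F v := by
    intro v
    rw [smul_eq_mul]
    congr 2
    rw [inner_smul_right]
    have : inner ℝ v (Complex.equivRealProdCLM.symm (τ, ξ)) = v.re * τ + v.im * ξ := by
      simp [Complex.inner, Complex.equivRealProdCLM_symm_apply]
      ring
    rw [this]
    have h2 : 2 * Real.pi * (-(2 * Real.pi)⁻¹ * (v.re * τ + v.im * ξ)) = -(v.re * τ + v.im * ξ) := by
      field_simp
    rw [h2]; push_cast; ring
  simp_rw [key]
  have hmp := Complex.volume_preserving_equiv_real_prod.symm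
  rw [← hmp.integral_comp (MeasurableEquiv.measurableEmbedding _)]
  unfold FT2
  rw [MeasureTheory.Measure.volume_eq_prod, integral_prod]
  · simp [Complex.measurableEquivRealProd, Complex.equivRealProdCLM_symm_apply]
  · have hi : Integrable (fun v : ℂ => Complex.exp (-Complex.I * (v.re * τ + v.im * ξ)) * F v) := by
      refine (F.integrable (μ := volume)).bdd_mul (c := 1) (by fun_prop) ?_
      refine Eventually.of_forall fun v => ?_
      rw [Complex.norm_exp]
      simp
    exact hmp.integrable_comp_emb (MeasurableEquiv.measurableEmbedding _) |>.2 hi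

noncomputable def liftS (f : SchwartzMap (ℝ × ℝ) ℂ) : SchwartzMap ℂ ℂ :=
  SchwartzMap.compCLMOfContinuousLinearEquiv ℂ Complex.equivRealProdCLM f

lemma liftS_apply (f : SchwartzMap (ℝ × ℝ) ℂ) (t x : ℝ) :
    liftS f (Complex.equivRealProdCLM.symm (t, x)) = f (t, x) := by
  simp [liftS]

open FourierTransform in
lemma FT2_schwartz (f : SchwartzMap (ℝ × ℝ) ℂ) (τ ξ : ℝ) :
    FT2 (fun t x => f (t, x)) τ ξ =
      (𝓕⁻ (liftS f)) ((-(2 * Real.pi)⁻¹ : ℝ) • Complex.equivRealProdCLM.symm (τ, ξ)) := by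
  rw [← FT2_eq]; simp_rw [liftS_apply]

lemma FT2_continuous (f : SchwartzMap (ℝ × ℝ) ℂ) :
    Continuous (fun p : ℝ × ℝ => FT2 (fun t x => f (t, x)) p.1 p.2) := by
  simp_rw [FT2_schwartz]
  have h := (FourierTransformInv.fourierInv (liftS f) : SchwartzMap ℂ ℂ).continuous
  have h2 : Continuous fun p : ℝ × ℝ =>
      (-(2 * Real.pi)⁻¹ : ℝ) • Complex.equivRealProdCLM.symm p :=
    Continuous.fun_const_smul (Complex.equivRealProdCLM.symm.continuous) _
  exact h.comp h2

open FourierTransform LineDeriv in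
lemma FT2_conv (f g : SchwartzMap (ℝ × ℝ) ℂ) (τ ξ : ℝ) :
    ‖FT2 (fun t x => f (t, x) * deriv (fun y => g (t, y)) x) τ ξ‖ₑ ≤
      ENNReal.ofReal 1 * ∫⁻ p : ℝ × ℝ, ‖FT2 (fun t x => f (t, x)) (τ - p.1) (ξ - p.2)‖ₑ *
        (‖p.2‖ₑ * ‖FT2 (fun t x => g (t, x)) p.1 p.2‖ₑ) := by
  set G := liftS g with hG
  set F := liftS f with hF
  set B : ℂ →L[ℂ] ℂ →L[ℂ] ℂ := ContinuousLinearMap.mul ℂ ℂ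
  set c : ℝ := -(2 * Real.pi)⁻¹ with hc
  have hc0 : c ≠ 0 := by simp [hc, Real.pi_ne_zero]
  set e := Complex.equivRealProdCLM.symm with he
  set P : SchwartzMap ℂ ℂ := SchwartzMap.pairing B (∂_{Complex.I} G) F with hP
  have h1 : (fun t x => f (t, x) * deriv (fun y => g (t, y)) x) =
      fun t x => P (e (t, x)) := by
    ext t x
    simp only [hP, SchwartzMap.pairing_apply_apply, B, ContinuousLinearMap.mul_apply', hF, liftS_apply, he]
    rw [mul_comm, SchwartzMap.lineDerivOp_apply, lineDeriv]
    congr 1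
    have : ∀ s : ℝ, G (Complex.equivRealProdCLM.symm (t, x) + s • Complex.I) = g (t, x + s) := by
      intro s
      rw [← liftS_apply]
      congr 1
      simp [Complex.equivRealProdCLM_symm_apply]; ring
    simp_rw [this]
    have := deriv_comp_const_add (f := fun y => g (t, y)) x 0
    simpa using this.symm
  rw [h1, FT2_eq]
  have h2 : 𝓕⁻ P = SchwartzMap.convolution B (𝓕⁻ (∂_{Complex.I} G)) (𝓕⁻ F) := by
    simp [SchwartzMap.convolution, hP]
  rw [h2, SchwartzMap.convolution_apply, MeasureTheory.convolution_def]
  have h3 : ∫ w : ℂ, B ((𝓕⁻ (∂_{Complex.I} G)) w) ((𝓕⁻ F) (c • e (τ, ξ) - w)) =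
     |c ^ 2| • ∫ w : ℂ, B ((𝓕⁻ (∂_{Complex.I} G)) (c • w)) ((𝓕⁻ F) (c • e (τ, ξ) - c • w)) := by
    have h30 := Measure.integral_comp_smul volume (fun w => B ((𝓕⁻ (∂_{Complex.I} G)) w) ((𝓕⁻ F) (c • e (τ, ξ) - w))) c
    rw [h30]
    rw [Complex.finrank_real_complex, smul_smul, ← abs_mul, mul_inv_cancel₀ (pow_ne_zero 2 hc0)]
    simp
  rw [h3]
  have hmp := Complex.volume_preserving_equiv_real_prod.symm
  rw [← hmp.integral_comp (MeasurableEquiv.measurableEmbedding _)]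
  have h4 : ∀ p : ℝ × ℝ, (Complex.measurableEquivRealProd.symm p) = e p := by
    intro p
    apply Complex.ext <;> simp [he, Complex.measurableEquivRealProd,  Complex.equivRealProdCLM_symm_apply]
  simp_rw [h4]
  have hc1 : ‖(|c ^ 2| : ℝ)‖ₑ ≤ ENNReal.ofReal 1 := by
    rw [Real.enorm_eq_ofReal (abs_nonneg _)]
    apply ENNReal.ofReal_le_ofReal
    have h3 := Real.pi_gt_three
    have : |c| ≤ 1 := by
      rw [hc, abs_neg, abs_inv, abs_of_pos (by positivity)]
      apply inv_le_one_of_one_le₀; linarith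
    rw [abs_pow]
    exact pow_le_one₀ (abs_nonneg _) this
  rw [enorm_smul]
  refine mul_le_mul' hc1 ((enorm_integral_le_lintegral_enorm _).trans (lintegral_mono fun p => ?_))
  simp only [B, ContinuousLinearMap.mul_apply', enorm_mul]
  rw [FT2_schwartz, FT2_schwartz, mul_comm]
  refine mul_le_mul' (le_of_eq ?_) (le_of_eq ?_)
  · congr 2
    rw [← smul_sub, ← map_sub]; rfl
  · rw [SchwartzMap.fourierInv_lineDerivOp_eq]
    have : (fun x : ℂ => inner ℝ x Complex.I).HasTemperateGrowth := by fun_prop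
    rw [smul_apply, SchwartzMap.smulLeftCLM_apply_apply this, enorm_smul, enorm_smul, ← mul_assoc]
    congr 1
    rw [← ofReal_norm, ← ofReal_norm, ← ofReal_norm,
      ← ENNReal.ofReal_mul (norm_nonneg _)]
    congr 1
    have h5 : inner ℝ (c • e p) Complex.I = c * p.2 := by
      simp [Complex.inner, he, Complex.equivRealProdCLM_symm_apply]
    rw [h5, norm_mul, hc]
    simp [abs_of_pos Real.pi_pos]
    field_simp

lemma cov_interval {φ φ' : ℝ → ℝ} (hφ : ∀ x, HasDerivAt φ (φ' x) x) {S : Set ℝ}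
    (hS : MeasurableSet S) (hc : S.OrdConnected) (hne : ∀ x ∈ S, φ' x ≠ 0) (h : ℝ → ℝ≥0∞) :
    ∫⁻ x in S, ENNReal.ofReal |φ' x| * h (φ x) ≤ ∫⁻ y, h y := by
  have hlt : ∀ x ∈ S, ∀ y ∈ S, x < y → φ x ≠ φ y := by
    intro x hx y hy hxy heq
    obtain ⟨c, hc1, hc2⟩ := exists_hasDerivAt_eq_zero hxy
      (fun z _ => (hφ z).continuousAt.continuousWithinAt) heq (fun z _ => hφ z)
    exact hne c (hc.out hx hy (Ioo_subset_Icc_self hc1)) hc2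
  have hinj : InjOn φ S := by
    intro x hx y hy heq
    by_contra hxy
    rcases lt_or_gt_of_ne hxy with h1 | h1
    · exact hlt x hx y hy h1 heq
    · exact hlt y hy x hx h1 heq.symm
  rw [← lintegral_image_eq_lintegral_abs_deriv_mul hS (fun x _ => (hφ x).hasDerivWithinAt) hinj]
  exact setLIntegral_le_lintegral _ _

lemma cov_line {φ φ' : ℝ → ℝ} (hφ : ∀ x, HasDerivAt φ (φ' x) x) (x1 x2 : ℝ)
    (hne : ∀ x, φ' x = 0 → x = x1 ∨ x = x2) (h : ℝ → ℝ≥0∞) :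
    ∫⁻ x, ENNReal.ofReal |φ' x| * h (φ x) ≤ 3 * ∫⁻ y, h y := by
  wlog hle : x1 ≤ x2 generalizing x1 x2
  · exact this x2 x1 (fun x hx => (hne x hx).symm) (le_of_not_ge hle)
  have hu : (univ : Set ℝ) = ({x1, x2} : Set ℝ) ∪ (Iio x1 ∪ (Ioo x1 x2 ∪ Ioi x2)) := by
    ext x
    simp only [mem_univ, mem_union, mem_insert_iff, mem_singleton_iff, mem_Iio, mem_Ioo, mem_Ioi,
      true_iff]
    rcases lt_trichotomy x x1 with h1 | h1 | h1
    · simp [h1]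
    · simp [h1]
    · rcases lt_trichotomy x x2 with h2 | h2 | h2 <;> simp [h1, h2]
  set g : ℝ → ℝ≥0∞ := fun x => ENNReal.ofReal |φ' x| * h (φ x) with hg
  have h0 : ∫⁻ x in ({x1, x2} : Set ℝ), g x = 0 := by
    apply setLIntegral_measure_zero
    exact (Set.toFinite _).measure_zero _
  have h1 : ∫⁻ x in Iio x1, g x ≤ ∫⁻ y, h y := by
    refine cov_interval hφ measurableSet_Iio ordConnected_Iio (fun x hx h0 => ?_) h
    rcases hne x h0 with rfl | rfl <;> simp at hx; linarith
  have h2 : ∫⁻ x in Ioo x1 x2, g x ≤ ∫⁻ y, h y := by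
    refine cov_interval hφ measurableSet_Ioo ordConnected_Ioo (fun x hx h0 => ?_) h
    rcases hne x h0 with rfl | rfl <;> simp at hx
  have h3 : ∫⁻ x in Ioi x2, g x ≤ ∫⁻ y, h y := by
    refine cov_interval hφ measurableSet_Ioi ordConnected_Ioi (fun x hx h0 => ?_) h
    rcases hne x h0 with rfl | rfl <;> simp at hx; linarith
  calc ∫⁻ x, g x = ∫⁻ x in ({x1, x2} : Set ℝ) ∪ (Iio x1 ∪ (Ioo x1 x2 ∪ Ioi x2)), g x := by
        rw [← hu, Measure.restrict_univ]
    _ ≤ (∫⁻ x in ({x1, x2} : Set ℝ), g x) + ((∫⁻ x in Iio x1, g x) +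
          ((∫⁻ x in Ioo x1 x2, g x) + ∫⁻ x in Ioi x2, g x)) := by
        refine (lintegral_union_le _ _ _).trans ?_
        gcongr
        refine (lintegral_union_le _ _ _).trans ?_
        gcongr
        exact lintegral_union_le _ _ _
    _ ≤ 0 + ((∫⁻ y, h y) + ((∫⁻ y, h y) + ∫⁻ y, h y)) := by
        gcongr
        exact h0.le
    _ = 3 * ∫⁻ y, h y := by ring

lemma key1D {φ φ' W : ℝ → ℝ} (hφ : ∀ x, HasDerivAt φ (φ' x) x) (x1 x2 : ℝ)
    (hne : ∀ x, φ' x = 0 → x = x1 ∨ x = x2) (h : ℝ → ℝ≥0∞) (hh : ∀ y, h y ≤ 1)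
    {D E η : ℝ} (hD : 0 ≤ D) (hE : 0 ≤ E) (hEη : E * η ≤ D)
    (hW : ∀ x, W x ≤ D * |φ' x| ∨ ((|x - x1| ≤ η ∨ |x - x2| ≤ η) ∧ W x ≤ E)) :
    ∫⁻ x, ENNReal.ofReal (W x) * h (φ x) ≤ ENNReal.ofReal D * (3 * (∫⁻ y, h y) + 4) := by
  set A : Set ℝ := Icc (x1 - η) (x1 + η) ∪ Icc (x2 - η) (x2 + η) with hA
  have hAm : MeasurableSet A := measurableSet_Icc.union measurableSet_Icc
  have hp : ∀ x, ENNReal.ofReal (W x) * h (φ x) ≤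
      ENNReal.ofReal D * (ENNReal.ofReal |φ' x| * h (φ x)) + A.indicator (fun _ => ENNReal.ofReal E) x := by
    intro x
    rcases hW x with h1 | ⟨h1, h2⟩
    · refine le_trans ?_ le_self_add
      rw [← mul_assoc, ← ENNReal.ofReal_mul hD]
      gcongr
    · refine le_trans ?_ le_add_self
      have hx : x ∈ A := by
        rcases h1 with h1 | h1
        · left; rw [abs_le] at h1; constructor <;> linarith
        · right; rw [abs_le] at h1; constructor <;> linarith
      rw [indicator_of_mem hx]
      calc _ ≤ ENNReal.ofReal E * 1 := by gcongr; exact hh _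
        _ = _ := mul_one _
  have hAvol : volume A ≤ ENNReal.ofReal (4 * η) := by
    by_cases hη : 0 ≤ η
    · refine (measure_union_le _ _).trans ?_
      rw [Real.volume_Icc, Real.volume_Icc, ← ENNReal.ofReal_add (by linarith) (by linarith)]
      apply ENNReal.ofReal_le_ofReal; linarith
    · have : A = ∅ := by
        rw [hA, Icc_eq_empty (by linarith), Icc_eq_empty (by linarith), union_empty]
      simp [this]
  calc _ ≤ ∫⁻ x, (ENNReal.ofReal D * (ENNReal.ofReal |φ' x| * h (φ x)) +
        A.indicator (fun _ => ENNReal.ofReal E) x) := lintegral_mono hp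
    _ = ENNReal.ofReal D * (∫⁻ x, ENNReal.ofReal |φ' x| * h (φ x)) + ENNReal.ofReal E * volume A := by
        rw [lintegral_add_right _ (measurable_const.indicator hAm), lintegral_const_mul' _ _ ENNReal.ofReal_ne_top,
          lintegral_indicator_const hAm]
    _ ≤ ENNReal.ofReal D * (3 * ∫⁻ y, h y) + ENNReal.ofReal E * ENNReal.ofReal (4 * η) := by
        gcongr
        exact cov_line hφ x1 x2 hne h
    _ ≤ ENNReal.ofReal D * (3 * ∫⁻ y, h y) + ENNReal.ofReal D * 4 := by
        refine add_le_add le_rfl ?_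
        rw [← ENNReal.ofReal_mul hE, show (4 : ℝ≥0∞) = ENNReal.ofReal 4 by simp, ← ENNReal.ofReal_mul hD]
        apply ENNReal.ofReal_le_ofReal; nlinarith
    _ = _ := by ring

noncomputable def Vw (ξ ξ1 : ℝ) : ℝ := |ξ1| * (1 + |ξ1| + |ξ - ξ1|) / (√(1 + |ξ|)) ^ 3

lemma Vw_nonneg (ξ ξ1 : ℝ) : 0 ≤ Vw ξ ξ1 := by unfold Vw; positivity

lemma kappa_exists (a₁ a₂ : ℝ) (ha₁ : a₁ ≠ 0) (hratio : a₂ / a₁ < 0 ∨ 4 < a₂ / a₁) :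
    ∃ κ c : ℝ, 2 ≤ κ ∧ 0 < c ∧ ∀ u v : ℝ, c * (|u - κ * v| * |u + κ * v|) ≤ |a₁ * u ^ 2 - a₂ * v ^ 2| := by
  set r := a₂ / a₁ with hr
  have ha2 : a₂ = r * a₁ := by rw [hr]; field_simp
  have hpos : 0 < |a₁| := abs_pos.2 ha₁
  have e1 : ∀ u v : ℝ, |a₁ * u ^ 2 - a₂ * v ^ 2| = |a₁| * |u ^ 2 - r * v ^ 2| := by
    intro u v; rw [← abs_mul, ha2]; congr 1; ring
  rcases hratio with h | h
  · refine ⟨2, |a₁| * min 1 (-r / 4), le_rfl, mul_pos hpos (lt_min one_pos (by linarith)), ?_⟩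
    intro u v
    rw [e1, mul_assoc, ← abs_mul]
    apply mul_le_mul_of_nonneg_left _ hpos.le
    have h1 : |u ^ 2 - r * v ^ 2| = u ^ 2 - r * v ^ 2 := abs_of_nonneg (by nlinarith [sq_nonneg u, sq_nonneg v])
    have h2 : |(u - 2 * v) * (u + 2 * v)| ≤ u ^ 2 + 4 * v ^ 2 := by
      rw [abs_le]; constructor <;> nlinarith [sq_nonneg u, sq_nonneg v]
    have m1 : min 1 (-r / 4) ≤ 1 := min_le_left _ _
    have m2 : min 1 (-r / 4) ≤ -r / 4 := min_le_right _ _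
    have m0 : 0 < min 1 (-r / 4) := lt_min one_pos (by linarith)
    rw [h1]
    calc _ ≤ min 1 (-r / 4) * (u ^ 2 + 4 * v ^ 2) := mul_le_mul_of_nonneg_left h2 m0.le
      _ ≤ _ := by nlinarith [sq_nonneg u, sq_nonneg v]
  · refine ⟨√r, |a₁|, Real.le_sqrt_of_sq_le (by linarith), hpos, ?_⟩
    intro u v
    rw [e1, ← abs_mul]
    apply le_of_eq
    congr 2
    have : √r ^ 2 = r := Real.sq_sqrt (by linarith)
    linear_combination -v ^ 2 * this

lemma resonance (a₁ a₂ : ℝ) (ha₁ : a₁ ≠ 0) (hratio : a₂ / a₁ < 0 ∨ 4 < a₂ / a₁) :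
    ∃ c : ℝ, 0 < c ∧ ∀ ξ ξ1 : ℝ, c * (|ξ1| * (ξ ^ 2 + ξ1 ^ 2)) ≤
      |a₂ * ξ ^ 3 - a₁ * ξ1 ^ 3 - a₂ * (ξ - ξ1) ^ 3| := by
  set r := a₂ / a₁ with hr
  have ha2 : a₂ = r * a₁ := by rw [hr]; field_simp
  have hpos : 0 < |a₁| := abs_pos.2 ha₁
  have e1 : ∀ x y : ℝ, |a₂ * x ^ 3 - a₁ * y ^ 3 - a₂ * (x - y) ^ 3| =
      |y| * (|a₁| * |3 * r * (x - y / 2) ^ 2 + (r / 4 - 1) * y ^ 2|) := by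
    intro x y; rw [← abs_mul, ← abs_mul, ha2]; congr 1; ring
  have hk : ∃ k : ℝ, 0 < k ∧ ∀ x y : ℝ, k * (x ^ 2 + y ^ 2) ≤
      |3 * r * (x - y / 2) ^ 2 + (r / 4 - 1) * y ^ 2| := by
    have aux : ∀ A B : ℝ, 0 < A → 0 < B → ∃ k : ℝ, 0 < k ∧ ∀ x y : ℝ, k * (x ^ 2 + y ^ 2) ≤
      A * (x - y / 2) ^ 2 + B * y ^ 2 := by
      intro A B hA hB
      refine ⟨min A B / 4, by positivity, ?_⟩
      intro x y
      have m1 : min A B ≤ A := min_le_left _ _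
      have m2 : min A B ≤ B := min_le_right _ _
      have m0 : 0 < min A B := lt_min hA hB
      have h3 : (x ^ 2 + y ^ 2) ≤ 4 * ((x - y / 2) ^ 2 + y ^ 2) := by nlinarith [sq_nonneg (x - y), sq_nonneg y]
      calc min A B / 4 * (x ^ 2 + y ^ 2) ≤ min A B / 4 * (4 * ((x - y / 2) ^ 2 + y ^ 2)) := by gcongr
        _ = min A B * (x - y / 2) ^ 2 + min A B * y ^ 2 := by ring
        _ ≤ _ := by gcongr
    rcases hratio with h | h
    · obtain ⟨k, hk, hk2⟩ := aux (-(3 * r)) (-(r / 4 - 1)) (by linarith) (by linarith)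
      refine ⟨k, hk, fun x y => (hk2 x y).trans ?_⟩
      refine le_trans (le_of_eq ?_) (neg_le_abs _); ring
    · obtain ⟨k, hk, hk2⟩ := aux (3 * r) (r / 4 - 1) (by linarith) (by linarith)
      exact ⟨k, hk, fun x y => (hk2 x y).trans (le_abs_self _)⟩
  obtain ⟨k, hk, hk2⟩ := hk
  refine ⟨|a₁| * k, by positivity, fun x y => ?_⟩
  rw [e1]
  calc _ = |y| * (|a₁| * (k * (x ^ 2 + y ^ 2))) := by ring
    _ ≤ _ := by gcongr; exact hk2 x y

lemma pq_lemma (p q h : ℝ) (hh : 1 ≤ h) (hp : 1 / h ≤ p) (hq : 1 / h ≤ q) (hpq : |p - q| ≤ 2 * h ^ 2) :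
    (1 + p + q) ^ 2 ≤ 100 * (h ^ 3 * (p * q)) := by
  wlog hle : p ≤ q generalizing p q
  · have := this q p hq hp (by rwa [abs_sub_comm]) (le_of_not_ge hle)
    calc _ = (1 + q + p) ^ 2 := by ring
      _ ≤ _ := this
      _ = _ := by ring
  have h0 : 0 < h := by linarith
  have hp1 : 1 ≤ h * p := by rw [div_le_iff₀ h0] at hp; linarith
  have hq1 : 1 ≤ h * q := by rw [div_le_iff₀ h0] at hq; linarith
  have hp0 : 0 < p := lt_of_lt_of_le (by positivity) hp
  have hq0 : 0 < q := lt_of_lt_of_le (by positivity) hq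
  have hh2 : 1 ≤ h ^ 2 := one_le_pow₀ hh
  have hh3 : 1 ≤ h ^ 3 := one_le_pow₀ hh
  rw [abs_le] at hpq
  by_cases hq4 : q ≤ 4 * h ^ 2
  · -- `h^3 p q ≥ h^2 q`
    have e1 : h ^ 2 * q ≤ h ^ 3 * (p * q) := by
      have : 0 ≤ (h * p - 1) * (h ^ 2 * q) := mul_nonneg (by linarith) (by positivity)
      nlinarith
    have e2 : 1 ≤ h ^ 2 * q := by nlinarith
    have e3 : q ≤ h ^ 2 * q := by nlinarith
    have e4 : q * q ≤ 4 * (h ^ 2 * q) := by nlinarith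
    have e5 : (1 + p + q) ^ 2 ≤ (1 + 2 * q) ^ 2 := by
      apply pow_le_pow_left₀ (by positivity); linarith
    nlinarith
  · push Not at hq4
    have e1 : q ≤ 2 * p := by linarith
    have e2 : p * q ≤ h ^ 3 * (p * q) := le_mul_of_one_le_left (by positivity) hh3
    have e3 : q * q ≤ 2 * (p * q) := by nlinarith
    have e5 : (1 + p + q) ^ 2 ≤ (3 * q) ^ 2 := by
      apply pow_le_pow_left₀ (by positivity); linarith
    nlinarith

lemma WA (a₁ a₂ κ c : ℝ) (hκ : 2 ≤ κ) (hc : 0 < c)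
    (hlow : ∀ u v : ℝ, c * (|u - κ * v| * |u + κ * v|) ≤ |a₁ * u ^ 2 - a₂ * v ^ 2|) :
    ∃ D : ℝ, 0 ≤ D ∧ ∀ ξ : ℝ, ∃ x1 x2 E η : ℝ, 0 ≤ E ∧ E * η ≤ D ∧
      (∀ x, 3 * (a₁ * x ^ 2 - a₂ * (ξ - x) ^ 2) = 0 → x = x1 ∨ x = x2) ∧
      ∀ x, Vw ξ x ≤ D * |3 * (a₁ * x ^ 2 - a₂ * (ξ - x) ^ 2)| ∨
        ((|x - x1| ≤ η ∨ |x - x2| ≤ η) ∧ Vw ξ x ≤ E) := by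
  refine ⟨10 + 100 * (2 + 3 * κ) ^ 2 / c, by positivity, fun ξ => ?_⟩
  set D := 10 + 100 * (2 + 3 * κ) ^ 2 / c with hD
  set h := √(1 + |ξ|) with hh
  have hh2 : h ^ 2 = 1 + |ξ| := Real.sq_sqrt (by positivity)
  have hh1 : 1 ≤ h := Real.one_le_sqrt.2 (by linarith [abs_nonneg ξ])
  have hh0 : 0 < h := by linarith
  set x1 := κ / (κ + 1) * ξ with hx1
  set x2 := κ / (κ - 1) * ξ with hx2
  have hk1 : 0 < κ - 1 := by linarith
  have hk2 : 0 < κ + 1 := by linarith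
  have hlow' : ∀ x, c * (|x - x1| * |x - x2|) ≤ |3 * (a₁ * x ^ 2 - a₂ * (ξ - x) ^ 2)| := by
    intro x
    have h1 : x - κ * (ξ - x) = (κ + 1) * (x - x1) := by rw [hx1]; field_simp; ring
    have h2 : x + κ * (ξ - x) = -((κ - 1) * (x - x2)) := by rw [hx2]; field_simp; ring
    have h3 := hlow x (ξ - x)
    rw [h1, h2, abs_neg, abs_mul, abs_mul, abs_of_pos hk1, abs_of_pos hk2] at h3
    rw [abs_mul, abs_of_pos (by norm_num : (0:ℝ) < 3)]
    have h4 : c * (|x - x1| * |x - x2|) ≤ c * ((κ + 1) * |x - x1| * ((κ - 1) * |x - x2|)) := by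
      apply mul_le_mul_of_nonneg_left _ hc.le
      apply mul_le_mul
      · exact le_mul_of_one_le_left (abs_nonneg _) (by linarith)
      · exact le_mul_of_one_le_left (abs_nonneg _) (by linarith)
      · positivity
      · positivity
    have := abs_nonneg (a₁ * x ^ 2 - a₂ * (ξ - x) ^ 2)
    linarith
  have hax1 : |x1| ≤ |ξ| := by
    rw [hx1, abs_mul, abs_of_pos (by positivity)]
    refine mul_le_of_le_one_left (abs_nonneg _) ?_
    rw [div_le_one hk2]; linarith
  have hax2 : |x2| ≤ 2 * |ξ| := by
    rw [hx2, abs_mul, abs_of_pos (by positivity)]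
    refine mul_le_mul_of_nonneg_right ?_ (abs_nonneg _)
    rw [div_le_iff₀ hk1]; linarith
  have hd : |x1 - x2| ≤ 2 * |ξ| := by
    have : x1 - x2 = -(2 * κ / ((κ + 1) * (κ - 1)) * ξ) := by rw [hx1, hx2]; field_simp; ring
    rw [this, abs_neg, abs_mul, abs_of_pos (by positivity)]
    refine mul_le_mul_of_nonneg_right ?_ (abs_nonneg _)
    rw [div_le_iff₀ (by positivity)]; nlinarith
  have hd2 : |ξ| ≤ κ * |x1 - x2| := by
    have : x1 - x2 = -(2 * κ / ((κ + 1) * (κ - 1)) * ξ) := by rw [hx1, hx2]; field_simp; ring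
    rw [this, abs_neg, abs_mul, abs_of_pos (show 0 < 2 * κ / ((κ + 1) * (κ - 1)) by positivity), ← mul_assoc]
    refine le_mul_of_one_le_left (abs_nonneg _) ?_
    rw [mul_div_assoc', le_div_iff₀ (by positivity)]; nlinarith
  refine ⟨x1, x2, 10 * h, 1 / h, by positivity, ?_, ?_, ?_⟩
  · rw [mul_assoc, mul_one_div_cancel hh0.ne']
    have : 0 ≤ 100 * (2 + 3 * κ) ^ 2 / c := by positivity
    linarith
  · intro x hx
    have h1 := hlow' x
    rw [hx, abs_zero] at h1
    have h2 : |x - x1| * |x - x2| = 0 := by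
      apply le_antisymm _ (by positivity)
      by_contra h3
      push Not at h3
      have := mul_pos hc h3
      linarith
    rcases mul_eq_zero.1 h2 with h3 | h3
    · left; linarith [abs_eq_zero.1 h3]
    · right; linarith [abs_eq_zero.1 h3]
  · intro x
    have hη : 1 / h ≤ 1 := by rw [div_le_one hh0]; exact hh1
    have hN : |ξ - x| ≤ |ξ| + |x| := abs_sub _ _
    have hx0 := abs_nonneg x
    have hxi := abs_nonneg ξ
    have hxp : |x| ≤ |x - x1| + |x1| := by simpa using abs_add_le (x - x1) x1
    have hxq : |x| ≤ |x - x2| + |x2| := by simpa using abs_add_le (x - x2) x2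
    unfold Vw
    rw [← hh]
    have bad : |x| ≤ 2 * h ^ 2 → |x| * (1 + |x| + |ξ - x|) / h ^ 3 ≤ 10 * h := by
      intro hb
      rw [div_le_iff₀ (by positivity)]
      calc _ ≤ 2 * h ^ 2 * (5 * h ^ 2) := by
            apply mul_le_mul hb _ (by positivity) (by positivity)
            linarith
        _ = _ := by ring
    by_cases hb1 : |x - x1| ≤ 1 / h
    · right; exact ⟨Or.inl hb1, bad (by linarith)⟩
    by_cases hb2 : |x - x2| ≤ 1 / h
    · right; exact ⟨Or.inr hb2, bad (by linarith)⟩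
    left
    push Not at hb1 hb2
    set p := |x - x1| with hp
    set q := |x - x2| with hq
    have hpq : |p - q| ≤ 2 * h ^ 2 := by
      have := abs_abs_sub_abs_le_abs_sub (x - x1) (x - x2)
      have e : x - x1 - (x - x2) = -(x1 - x2) := by ring
      rw [e, abs_neg] at this
      linarith
    have h5 := pq_lemma p q h hh1 hb1.le hb2.le hpq
    have hp0 : 0 ≤ p := abs_nonneg _
    have hq0 : 0 ≤ q := abs_nonneg _
    have hxpq : |x1 - x2| ≤ p + q := by
      have := abs_sub_le x1 x x2
      rw [abs_sub_comm x1 x] at this; exact this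
    have hN2 : 1 + |x| + |ξ - x| ≤ (2 + 3 * κ) * (1 + p + q) := by
      have : κ * |x1 - x2| ≤ κ * (p + q) := by gcongr
      nlinarith
    calc |x| * (1 + |x| + |ξ - x|) / h ^ 3 ≤ ((2 + 3 * κ) * (1 + p + q)) ^ 2 / h ^ 3 := by
          gcongr
          rw [sq]
          apply mul_le_mul _ hN2 (by positivity) (by positivity)
          linarith [abs_nonneg (ξ - x)]
      _ ≤ (2 + 3 * κ) ^ 2 * (100 * (p * q)) := by
          rw [div_le_iff₀ (by positivity), mul_pow]
          calc _ ≤ (2 + 3 * κ) ^ 2 * (100 * (h ^ 3 * (p * q))) := by gcongr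
            _ = _ := by ring
      _ = (100 * (2 + 3 * κ) ^ 2 / c) * (c * (p * q)) := by field_simp
      _ ≤ D * (c * (p * q)) := by
          apply mul_le_mul_of_nonneg_right _ (by positivity)
          rw [hD]; linarith
      _ ≤ _ := by
          apply mul_le_mul_of_nonneg_left (hlow' x) (by positivity)

set_option maxHeartbeats 1600000 in
lemma WC (a₁ a₂ κ c : ℝ) (hκ : 2 ≤ κ) (hc : 0 < c)
    (hlow : ∀ u v : ℝ, c * (|u - κ * v| * |u + κ * v|) ≤ |a₁ * u ^ 2 - a₂ * v ^ 2|) :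
    ∃ D : ℝ, 0 ≤ D ∧ ∀ y : ℝ, ∃ x1 x2 E η : ℝ, 0 ≤ E ∧ E * η ≤ D ∧
      (∀ x, 3 * (a₁ * (x - y) ^ 2 - a₂ * x ^ 2) = 0 → x = x1 ∨ x = x2) ∧
      ∀ x, Vw x (x - y) ≤ D * |3 * (a₁ * (x - y) ^ 2 - a₂ * x ^ 2)| ∨
        ((|x - x1| ≤ η ∨ |x - x2| ≤ η) ∧ Vw x (x - y) ≤ E) := by
  set K := 8 * (κ + 1) with hK
  set D := 6 * K ^ 3 + K ^ 3 * (100 * (2 + 3 * κ) ^ 2) / c with hD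
  refine ⟨D, by positivity, fun y => ?_⟩
  set h := √(1 + |y|) with hh
  have hh2 : h ^ 2 = 1 + |y| := Real.sq_sqrt (by positivity)
  have hh1 : 1 ≤ h := Real.one_le_sqrt.2 (by linarith [abs_nonneg y])
  have hh0 : 0 < h := by linarith
  set x1 := -(1 / (κ - 1) * y) with hx1
  set x2 := 1 / (κ + 1) * y with hx2
  have hk1 : 0 < κ - 1 := by linarith
  have hk2 : 0 < κ + 1 := by linarith
  have hlow' : ∀ x, c * (|x - x1| * |x - x2|) ≤ |3 * (a₁ * (x - y) ^ 2 - a₂ * x ^ 2)| := by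
    intro x
    have h1 : (x - y) - κ * x = -((κ - 1) * (x - x1)) := by rw [hx1]; field_simp; ring
    have h2 : (x - y) + κ * x = ((κ + 1) * (x - x2)) := by rw [hx2]; field_simp; ring
    have h3 := hlow (x - y) x
    rw [h1, h2, abs_neg, abs_mul, abs_mul, abs_of_pos hk1, abs_of_pos hk2] at h3
    rw [abs_mul, abs_of_pos (by norm_num : (0:ℝ) < 3)]
    have h4 : c * (|x - x1| * |x - x2|) ≤ c * ((κ - 1) * |x - x1| * ((κ + 1) * |x - x2|)) := by
      apply mul_le_mul_of_nonneg_left _ hc.le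
      apply mul_le_mul
      · exact le_mul_of_one_le_left (abs_nonneg _) (by linarith)
      · exact le_mul_of_one_le_left (abs_nonneg _) (by linarith)
      · positivity
      · positivity
    have := abs_nonneg (a₁ * (x - y) ^ 2 - a₂ * x ^ 2)
    linarith
  have hax1 : |x1| ≤ |y| := by
    rw [hx1, abs_neg, abs_mul, abs_of_pos (by positivity)]
    refine mul_le_of_le_one_left (abs_nonneg _) ?_
    rw [div_le_one hk1]; linarith
  have hax2 : |x2| ≤ |y| := by
    rw [hx2, abs_mul, abs_of_pos (by positivity)]
    refine mul_le_of_le_one_left (abs_nonneg _) ?_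
    rw [div_le_one hk2]; linarith
  have hbx1 : |y| ≤ (κ + 1) * |x1| := by
    rw [hx1, abs_neg, abs_mul, abs_of_pos (show 0 < 1 / (κ - 1) by positivity), ← mul_assoc]
    refine le_mul_of_one_le_left (abs_nonneg _) ?_
    rw [mul_one_div, le_div_iff₀ hk1]; linarith
  have hbx2 : |y| = (κ + 1) * |x2| := by
    rw [hx2, abs_mul, abs_of_pos (show 0 < 1 / (κ + 1) by positivity)]
    field_simp
  have hd : |x1 - x2| ≤ 2 * |y| := by
    have := abs_sub x1 x2
    linarith
  have hd2 : |y| ≤ κ * |x1 - x2| := by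
    have : x1 - x2 = -(2 * κ / ((κ + 1) * (κ - 1)) * y) := by rw [hx1, hx2]; field_simp; ring
    rw [this, abs_neg, abs_mul, abs_of_pos (show 0 < 2 * κ / ((κ + 1) * (κ - 1)) by positivity), ← mul_assoc]
    refine le_mul_of_one_le_left (abs_nonneg _) ?_
    rw [mul_div_assoc', le_div_iff₀ (by positivity)]; nlinarith
  have hK1 : 1 ≤ K := by linarith
  refine ⟨x1, x2, 6 * K ^ 3 * h, 1 / h, by positivity, ?_, ?_, ?_⟩
  · rw [mul_assoc, mul_one_div_cancel hh0.ne']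
    have : 0 ≤ K ^ 3 * (100 * (2 + 3 * κ) ^ 2) / c := by positivity
    linarith
  · intro x hx
    have h1 := hlow' x
    rw [hx, abs_zero] at h1
    have h2 : |x - x1| * |x - x2| = 0 := by
      apply le_antisymm _ (by positivity)
      by_contra h3
      push Not at h3
      have := mul_pos hc h3
      linarith
    rcases mul_eq_zero.1 h2 with h3 | h3
    · left; linarith [abs_eq_zero.1 h3]
    · right; linarith [abs_eq_zero.1 h3]
  · intro x
    have hη : 1 / h ≤ 1 := by rw [div_le_one hh0]; exact hh1
    have hN : |x - y| ≤ |x| + |y| := abs_sub _ _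
    have hx0 := abs_nonneg x
    have hxi := abs_nonneg y
    have hxp : |x| ≤ |x - x1| + |x1| := by simpa using abs_add_le (x - x1) x1
    have hxq : |x| ≤ |x - x2| + |x2| := by simpa using abs_add_le (x - x2) x2
    have hxp' : |x1| ≤ |x - x1| + |x| := by
      have := abs_sub_le x1 x 0
      rw [abs_sub_comm x1 x] at this; simpa using this
    have hxq' : |x2| ≤ |x - x2| + |x| := by
      have := abs_sub_le x2 x 0
      rw [abs_sub_comm x2 x] at this; simpa using this
    unfold Vw
    rw [sub_sub_cancel]
    set k := √(1 + |x|) with hk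
    have hkk : k ^ 2 = 1 + |x| := Real.sq_sqrt (by positivity)
    have hk1' : 1 ≤ k := Real.one_le_sqrt.2 (by linarith [abs_nonneg x])
    have hk0 : 0 < k := by linarith
    have bad : |x| ≤ h ^ 2 → h ^ 2 ≤ K * k ^ 2 → |x - y| * (1 + |x - y| + |y|) / k ^ 3 ≤ 6 * K ^ 3 * h := by
      intro hb hb'
      have hhk : h ≤ K * k := by
        apply le_of_sq_le_sq _ (by positivity)
        rw [mul_pow]
        refine hb'.trans ?_
        gcongr
        nlinarith
      rw [div_le_iff₀ (by positivity)]
      calc _ ≤ 2 * h ^ 2 * (3 * h ^ 2) := by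
            apply mul_le_mul _ _ (by positivity) (by positivity)
            · linarith
            · linarith
        _ = 6 * h * h ^ 3 := by ring
        _ ≤ 6 * h * (K * k) ^ 3 := by gcongr
        _ = _ := by ring
    by_cases hb1 : |x - x1| ≤ 1 / h
    · right; refine ⟨Or.inl hb1, bad (by linarith) ?_⟩
      have := mul_le_mul_of_nonneg_left hxp' hk2.le
      have h7 := mul_le_mul_of_nonneg_left (hb1.trans hη) hk2.le
      have h8 := mul_nonneg hk2.le hx0
      rw [hh2, hkk, hK]; linarith
    by_cases hb2 : |x - x2| ≤ 1 / h
    · right; refine ⟨Or.inr hb2, bad (by linarith) ?_⟩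
      have := mul_le_mul_of_nonneg_left hxq' hk2.le
      have h7 := mul_le_mul_of_nonneg_left (hb2.trans hη) hk2.le
      have h8 := mul_nonneg hk2.le hx0
      rw [hh2, hkk, hK]; linarith
    left
    push Not at hb1 hb2
    set p := |x - x1| with hp
    set q := |x - x2| with hq
    have hpq : |p - q| ≤ 2 * h ^ 2 := by
      have := abs_abs_sub_abs_le_abs_sub (x - x1) (x - x2)
      have e : x - x1 - (x - x2) = -(x1 - x2) := by ring
      rw [e, abs_neg] at this
      linarith
    have h5 := pq_lemma p q h hh1 hb1.le hb2.le hpq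
    have hp0 : 0 ≤ p := abs_nonneg _
    have hq0 : 0 ≤ q := abs_nonneg _
    have hxpq : |x1 - x2| ≤ p + q := by
      have := abs_sub_le x1 x x2
      rw [abs_sub_comm x1 x] at this; exact this
    have hN2 : 1 + |x - y| + |y| ≤ (2 + 3 * κ) * (1 + p + q) := by
      have : κ * |x1 - x2| ≤ κ * (p + q) := by gcongr
      nlinarith
    have main : |x - y| * (1 + |x - y| + |y|) / k ^ 3 ≤ K ^ 3 * (100 * (2 + 3 * κ) ^ 2) * (p * q) := by
      rw [div_le_iff₀ (by positivity)]
      have hb : |x - y| * (1 + |x - y| + |y|) ≤ (1 + |x - y| + |y|) ^ 2 := by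
        rw [sq]
        apply mul_le_mul_of_nonneg_right _ (by positivity)
        linarith
      by_cases hcase : h ^ 2 ≤ K * k ^ 2
      · have hhk : h ≤ K * k := by
          apply le_of_sq_le_sq _ (by positivity)
          rw [mul_pow]
          refine hcase.trans ?_
          gcongr
          nlinarith
        calc _ ≤ ((2 + 3 * κ) * (1 + p + q)) ^ 2 := hb.trans (by gcongr)
          _ = (2 + 3 * κ) ^ 2 * (1 + p + q) ^ 2 := by ring
          _ ≤ (2 + 3 * κ) ^ 2 * (100 * (h ^ 3 * (p * q))) := by gcongr
          _ ≤ (2 + 3 * κ) ^ 2 * (100 * ((K * k) ^ 3 * (p * q))) := by gcongr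
          _ = _ := by ring
      · push Not at hcase
        rw [hh2, hkk] at hcase
        -- both distances are comparable to `1 + |y|`
        have e0 : 1 + |x - y| + |y| ≤ 3 * (1 + |y|) := by
          have : 1 * (1 + |x|) ≤ K * (1 + |x|) := by gcongr
          linarith
        have e1 : 1 + |y| ≤ K * p := by
          have := mul_le_mul_of_nonneg_left hxp' hk2.le
          rw [hK] at hcase ⊢
          linarith
        have e2 : 1 + |y| ≤ K * q := by
          have := mul_le_mul_of_nonneg_left hxq' hk2.le
          rw [hK] at hcase ⊢
          linarith
        have hk3 : 1 ≤ k ^ 3 := one_le_pow₀ hk1'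
        calc _ ≤ (3 * (1 + |y|)) ^ 2 := hb.trans (by gcongr)
          _ = 9 * ((1 + |y|) * (1 + |y|)) := by ring
          _ ≤ 9 * ((K * p) * (K * q)) := by gcongr
          _ = K ^ 2 * 9 * (p * q) * 1 := by ring
          _ ≤ K ^ 3 * (100 * (2 + 3 * κ) ^ 2) * (p * q) * k ^ 3 := by
              have i1 : K ^ 2 ≤ K ^ 3 := pow_le_pow_right₀ hK1 (by norm_num)
              have i2 : (9 : ℝ) ≤ 100 * (2 + 3 * κ) ^ 2 := by nlinarith
              gcongr
    calc _ ≤ K ^ 3 * (100 * (2 + 3 * κ) ^ 2) * (p * q) := main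
      _ = (K ^ 3 * (100 * (2 + 3 * κ) ^ 2) / c) * (c * (p * q)) := by field_simp
      _ ≤ D * (c * (p * q)) := by
          apply mul_le_mul_of_nonneg_right _ (by positivity)
          rw [hD]
          have : 0 ≤ 6 * K ^ 3 := by positivity
          linarith
      _ ≤ _ := by
          apply mul_le_mul_of_nonneg_left (hlow' x) (by positivity)

lemma WB (a₂ : ℝ) (ha₂ : a₂ ≠ 0) :
    ∃ D : ℝ, 0 ≤ D ∧ ∀ y : ℝ, y ≠ 0 → ∃ x1 x2 E η : ℝ, 0 ≤ E ∧ E * η ≤ D ∧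
      (∀ x, 3 * (a₂ * (x - y) ^ 2 - a₂ * x ^ 2) = 0 → x = x1 ∨ x = x2) ∧
      ∀ x, Vw x y ≤ D * |3 * (a₂ * (x - y) ^ 2 - a₂ * x ^ 2)| ∨
        ((|x - x1| ≤ η ∨ |x - x2| ≤ η) ∧ Vw x y ≤ E) := by
  have hpos : 0 < |a₂| := abs_pos.2 ha₂
  set D := 81 + 51 / |a₂| with hD
  refine ⟨D, by positivity, fun y hy => ?_⟩
  set h := √(1 + |y|) with hh
  have hh2 : h ^ 2 = 1 + |y| := Real.sq_sqrt (by positivity)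
  have hh1 : 1 ≤ h := Real.one_le_sqrt.2 (by linarith [abs_nonneg y])
  have hh0 : 0 < h := by linarith
  have hder : ∀ x, |3 * (a₂ * (x - y) ^ 2 - a₂ * x ^ 2)| = 6 * |a₂| * (|y| * |x - y / 2|) := by
    intro x
    have : 3 * (a₂ * (x - y) ^ 2 - a₂ * x ^ 2) = -(6 * a₂ * (y * (x - y / 2))) := by ring
    rw [this, abs_neg, abs_mul, abs_mul, abs_mul, abs_of_pos (by norm_num : (0:ℝ) < 6)]
  refine ⟨y / 2, y / 2, 81 * h, 1 / h, by positivity, ?_, ?_, ?_⟩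
  · rw [mul_assoc, mul_one_div_cancel hh0.ne']
    have : 0 ≤ 51 / |a₂| := by positivity
    linarith
  · intro x hx
    have h1 : (a₂ * y) * (x - y / 2) = 0 := by linear_combination (-1 / 6) * hx
    rcases mul_eq_zero.1 h1 with h2 | h2
    · exact absurd h2 (mul_ne_zero ha₂ hy)
    · left; linarith
  · intro x
    rw [hder]
    have hη : 1 / h ≤ 1 := by rw [div_le_one hh0]; exact hh1
    have hN : |x - y| ≤ |x| + |y| := abs_sub _ _
    have hx0 := abs_nonneg x
    have hxi := abs_nonneg y
    have hy2 : |y / 2| = |y| / 2 := by rw [abs_div]; norm_num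
    have hxp : |x| ≤ |x - y / 2| + |y| / 2 := by
      have := abs_add_le (x - y / 2) (y / 2)
      rw [hy2] at this; simpa using this
    have hxp' : |y| / 2 ≤ |x - y / 2| + |x| := by
      have := abs_sub_le (y / 2) x 0
      rw [abs_sub_comm (y / 2) x] at this; simpa [hy2] using this
    unfold Vw
    set k := √(1 + |x|) with hk
    have hkk : k ^ 2 = 1 + |x| := Real.sq_sqrt (by positivity)
    have hk1' : 1 ≤ k := Real.one_le_sqrt.2 (by linarith [abs_nonneg x])
    have hk0 : 0 < k := by linarith
    by_cases hb1 : |x - y / 2| ≤ 1 / h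
    · right; refine ⟨Or.inl hb1, ?_⟩
      have hhk : h ≤ 3 * k := by
        apply le_of_sq_le_sq _ (by positivity)
        rw [mul_pow, hh2, hkk]
        linarith
      rw [div_le_iff₀ (by positivity)]
      calc _ ≤ h ^ 2 * (3 * h ^ 2) := by
            apply mul_le_mul _ _ (by positivity) (by positivity)
            · linarith
            · linarith
        _ = 3 * h * h ^ 3 := by ring
        _ ≤ 3 * h * (3 * k) ^ 3 := by gcongr
        _ = _ := by ring
    · left
      push Not at hb1
      set p := |x - y / 2| with hp
      have hp0 : 0 ≤ p := abs_nonneg _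
      have hkp : k ^ 2 ≤ k ^ 3 := pow_le_pow_right₀ hk1' (by norm_num)
      have hk3 : 1 ≤ k ^ 3 := one_le_pow₀ hk1'
      have main : (1 + |y| + |x - y|) ≤ 51 * (k ^ 3 * p) := by
        by_cases hcase : h ^ 2 ≤ 8 * k ^ 2
        · have hhk : h ≤ 3 * k := by
            apply le_of_sq_le_sq _ (by positivity)
            rw [mul_pow]
            linarith [sq_nonneg k]
          have e1 : 1 ≤ 3 * k * p := by
            rw [div_lt_iff₀ hh0] at hb1
            nlinarith
          have e2 : k ^ 2 * 1 ≤ k ^ 2 * (3 * k * p) := by gcongr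
          have e3 : k ^ 2 * (3 * k * p) = 3 * (k ^ 3 * p) := by ring
          linarith
        · push Not at hcase
          have e1 : p ≤ k ^ 3 * p := le_mul_of_one_le_left hp0 hk3
          linarith
      rw [div_le_iff₀ (by positivity)]
      calc |y| * (1 + |y| + |x - y|) ≤ |y| * (51 * (k ^ 3 * p)) := by gcongr
        _ = (51 / |a₂|) * (|a₂| * (|y| * p)) * k ^ 3 := by field_simp
        _ ≤ D * (6 * |a₂| * (|y| * p)) * k ^ 3 := by
            gcongr
            · rw [hD]; linarith
            · linarith

noncomputable def jj (b y : ℝ) : ℝ≥0∞ := ENNReal.ofReal ((1 + |y|) ^ (-(2 * b)))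

lemma jj_meas (b : ℝ) : Measurable (jj b) := by
  unfold jj; fun_prop

lemma jj_le_one (b : ℝ) (hb : 1 / 2 < b) (y : ℝ) : jj b y ≤ 1 := by
  unfold jj
  rw [← ENNReal.ofReal_one]
  apply ENNReal.ofReal_le_ofReal
  apply Real.rpow_le_one_of_one_le_of_nonpos
  · linarith [abs_nonneg y]
  · linarith

lemma jj_fin (b : ℝ) (hb : 1 / 2 < b) : ∫⁻ y, jj b y ≠ ⊤ := by
  have := finite_integral_one_add_norm (μ := (volume : Measure ℝ)) (r := 2 * b)
    (by simp; linarith)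
  simpa [jj] using this.ne

lemma sup_gen {φ φ' W α r : ℝ → ℝ} {β : ℝ → ℝ → ℝ} (b : ℝ) (hb : 1 / 2 < b)
    (hφ : ∀ x, HasDerivAt φ (φ' x) x) (x1 x2 : ℝ)
    (hne : ∀ x, φ' x = 0 → x = x1 ∨ x = x2) {D E η : ℝ} (hD : 0 ≤ D) (hE : 0 ≤ E)
    (hEη : E * η ≤ D)
    (hW : ∀ x, W x ≤ D * |φ' x| ∨ ((|x - x1| ≤ η ∨ |x - x2| ≤ η) ∧ W x ≤ E))
    (hWm : Measurable W) (hα : Measurable α) (hr : Measurable r)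
    (hβm : Measurable (fun p : ℝ × ℝ => β p.1 p.2))
    (hβ : ∀ θ x, β (θ + α x) x = r θ - φ x) :
    ∫⁻ p : ℝ × ℝ, ENNReal.ofReal (W p.2) * (jj b (p.1 - α p.2) * jj b (β p.1 p.2)) ≤
      (∫⁻ y, jj b y) * (ENNReal.ofReal D * (3 * (∫⁻ y, jj b y) + 4)) := by
  have hjm := jj_meas b
  have hφc : Continuous φ := continuous_iff_continuousAt.2 fun x => (hφ x).continuousAt
  have hφm := hφc.measurable
  rw [Measure.volume_eq_prod, lintegral_prod_symm _ (by fun_prop)]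
  have step : ∀ x : ℝ, ∫⁻ τ : ℝ, ENNReal.ofReal (W x) * (jj b (τ - α x) * jj b (β τ x)) =
      ∫⁻ θ : ℝ, ENNReal.ofReal (W x) * (jj b θ * jj b (r θ - φ x)) := by
    intro x
    rw [← lintegral_add_right_eq_self _ (α x)]
    simp only [add_sub_cancel_right, hβ]
  simp only [step]
  rw [lintegral_lintegral_swap (by fun_prop), ← lintegral_mul_const _ hjm]
  apply lintegral_mono
  intro θ
  dsimp only
  have e : ∀ x, ENNReal.ofReal (W x) * (jj b θ * jj b (r θ - φ x)) =
      jj b θ * (ENNReal.ofReal (W x) * jj b (r θ - φ x)) := fun x => by ring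
  simp only [e]
  rw [lintegral_const_mul _ (by fun_prop)]
  gcongr
  have := key1D hφ x1 x2 hne (fun y => jj b (r θ - y)) (fun y => jj_le_one b hb _) hD hE hEη hW
  rwa [lintegral_sub_left_eq_self (fun y => jj b y) (r θ)] at this

lemma Vw_meas : Measurable (fun p : ℝ × ℝ => Vw p.1 p.2) := by
  unfold Vw; fun_prop

lemma supA (a₁ a₂ b : ℝ) (ha₁ : a₁ ≠ 0) (hratio : a₂ / a₁ < 0 ∨ 4 < a₂ / a₁) (hb : 1 / 2 < b) :
    ∃ K : ℝ≥0∞, K ≠ ⊤ ∧ ∀ z : ℝ × ℝ, ∫⁻ p : ℝ × ℝ, ENNReal.ofReal (Vw z.2 p.2) *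
      (jj b (p.1 - a₁ * p.2 ^ 3) * jj b ((z.1 - p.1) - a₂ * (z.2 - p.2) ^ 3)) ≤ K := by
  obtain ⟨κ, c, hκ, hc, hlow⟩ := kappa_exists a₁ a₂ ha₁ hratio
  obtain ⟨D, hD, H⟩ := WA a₁ a₂ κ c hκ hc hlow
  have hJ := jj_fin b hb
  refine ⟨(∫⁻ y, jj b y) * (ENNReal.ofReal D * (3 * (∫⁻ y, jj b y) + 4)), by finiteness, ?_⟩
  rintro ⟨τ, ξ⟩
  obtain ⟨x1, x2, E, η, hE, hEη, hne, hW⟩ := H ξ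
  refine sup_gen (φ := fun x => a₁ * x ^ 3 + a₂ * (ξ - x) ^ 3) (W := fun x => Vw ξ x)
    (α := fun x => a₁ * x ^ 3) (r := fun θ => τ - θ)
    (β := fun t x => (τ - t) - a₂ * (ξ - x) ^ 3) b hb ?_ x1 x2 hne hD hE hEη hW
    ?_ (by fun_prop) (by fun_prop) (by fun_prop) ?_
  · intro x
    have h1 := ((hasDerivAt_id x).pow 3).const_mul a₁
    have h2 := (((hasDerivAt_id x).const_sub ξ).pow 3).const_mul a₂
    refine (h1.add h2).congr_deriv ?_
    simp; ring
  · exact Vw_meas.comp (by fun_prop : Measurable fun x : ℝ => (ξ, x))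
  · intro θ x; ring

lemma supC (a₁ a₂ b : ℝ) (ha₁ : a₁ ≠ 0) (hratio : a₂ / a₁ < 0 ∨ 4 < a₂ / a₁) (hb : 1 / 2 < b) :
    ∃ K : ℝ≥0∞, K ≠ ⊤ ∧ ∀ z : ℝ × ℝ, ∫⁻ p : ℝ × ℝ, ENNReal.ofReal (Vw p.2 (p.2 - z.2)) *
      (jj b (p.1 - a₂ * p.2 ^ 3) * jj b ((p.1 - z.1) - a₁ * (p.2 - z.2) ^ 3)) ≤ K := by
  obtain ⟨κ, c, hκ, hc, hlow⟩ := kappa_exists a₁ a₂ ha₁ hratio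
  obtain ⟨D, hD, H⟩ := WC a₁ a₂ κ c hκ hc hlow
  have hJ := jj_fin b hb
  refine ⟨(∫⁻ y, jj b y) * (ENNReal.ofReal D * (3 * (∫⁻ y, jj b y) + 4)), by finiteness, ?_⟩
  rintro ⟨τ, y⟩
  obtain ⟨x1, x2, E, η, hE, hEη, hne, hW⟩ := H y
  refine sup_gen (φ := fun x => a₁ * (x - y) ^ 3 - a₂ * x ^ 3) (W := fun x => Vw x (x - y))
    (α := fun x => a₂ * x ^ 3) (r := fun θ => θ - τ)
    (β := fun t x => (t - τ) - a₁ * (x - y) ^ 3) b hb ?_ x1 x2 hne hD hE hEη hW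
    ?_ (by fun_prop) (by fun_prop) (by fun_prop) ?_
  · intro x
    have h1 := ((hasDerivAt_id x).pow 3).const_mul a₂
    have h2 := (((hasDerivAt_id x).sub_const y).pow 3).const_mul a₁
    refine (h2.sub h1).congr_deriv ?_
    simp; ring
  · exact Vw_meas.comp (by fun_prop : Measurable fun x : ℝ => (x, x - y))
  · intro θ x; ring

lemma supB (a₂ b : ℝ) (ha₂ : a₂ ≠ 0) (hb : 1 / 2 < b) :
    ∃ K : ℝ≥0∞, K ≠ ⊤ ∧ ∀ z : ℝ × ℝ, ∫⁻ p : ℝ × ℝ, ENNReal.ofReal (Vw p.2 z.2) *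
      (jj b (p.1 - a₂ * p.2 ^ 3) * jj b ((p.1 - z.1) - a₂ * (p.2 - z.2) ^ 3)) ≤ K := by
  obtain ⟨D, hD, H⟩ := WB a₂ ha₂
  have hJ := jj_fin b hb
  refine ⟨(∫⁻ y, jj b y) * (ENNReal.ofReal D * (3 * (∫⁻ y, jj b y) + 4)), by finiteness, ?_⟩
  rintro ⟨τ, y⟩
  by_cases hy : y = 0
  · subst hy
    simp [Vw]
  obtain ⟨x1, x2, E, η, hE, hEη, hne, hW⟩ := H y hy
  refine sup_gen (φ := fun x => a₂ * (x - y) ^ 3 - a₂ * x ^ 3) (W := fun x => Vw x y)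
    (α := fun x => a₂ * x ^ 3) (r := fun θ => θ - τ)
    (β := fun t x => (t - τ) - a₂ * (x - y) ^ 3) b hb ?_ x1 x2 hne hD hE hEη hW
    ?_ (by fun_prop) (by fun_prop) (by fun_prop) ?_
  · intro x
    have h1 := ((hasDerivAt_id x).pow 3).const_mul a₂
    have h2 := (((hasDerivAt_id x).sub_const y).pow 3).const_mul a₂
    refine (h2.sub h1).congr_deriv ?_
    simp; ring
  · exact Vw_meas.comp (by fun_prop : Measurable fun x : ℝ => (x, y))
  · intro θ x; ring

noncomputable def nrm (P : ℝ × ℝ → ℝ≥0∞) : ℝ≥0∞ := (∫⁻ z, P z ^ 2) ^ (1 / 2 : ℝ)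

lemma duality (T : ℝ × ℝ → ℝ≥0∞) (hT : Measurable T) (D : ℝ≥0∞)
    (h : ∀ H : ℝ × ℝ → ℝ≥0∞, Measurable H → ∫⁻ z, T z * H z ≤ D * nrm H) : nrm T ≤ D := by
  by_cases hDt : D = ⊤
  · rw [hDt]; exact le_top
  let S : ℕ → Set (ℝ × ℝ) := fun n => Metric.ball 0 n
  let Hn : ℕ → ℝ × ℝ → ℝ≥0∞ := fun n => (S n).indicator (fun z => min (T z) n)
  have hHm : ∀ n, Measurable (Hn n) := fun n =>
    (hT.min measurable_const).indicator Metric.isOpen_ball.measurableSet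
  have hle : ∀ n z, Hn n z ≤ T z := fun n z => by
    refine Set.indicator_apply_le' (fun _ => min_le_left _ _) (fun _ => bot_le)
  have hfin : ∀ n, ∫⁻ z, Hn n z ^ 2 ≠ ⊤ := by
    intro n
    have : ∫⁻ z, Hn n z ^ 2 ≤ ∫⁻ z in S n, (n : ℝ≥0∞) ^ 2 := by
      rw [← lintegral_indicator Metric.isOpen_ball.measurableSet]
      apply lintegral_mono
      intro z
      by_cases hz : z ∈ S n
      · simp only [Hn, Set.indicator_of_mem hz]
        rw [Set.indicator_of_mem (show z ∈ Metric.ball 0 (n : ℝ) from hz)]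
        exact pow_le_pow_left₀ bot_le (min_le_right (T z) (n : ℝ≥0∞)) 2
      · simp [Hn, Set.indicator_of_notMem hz]
    refine ne_top_of_le_ne_top ?_ this
    rw [setLIntegral_const]
    exact ENNReal.mul_ne_top (by finiteness) measure_ball_lt_top.ne
  have hb : ∀ n, ∫⁻ z, Hn n z ^ 2 ≤ D ^ 2 := by
    intro n
    have h1 : ∫⁻ z, Hn n z ^ 2 ≤ D * nrm (Hn n) := by
      refine le_trans ?_ (h _ (hHm n))
      apply lintegral_mono; intro z
      dsimp only
      rw [sq]; gcongr; exact hle n z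
    set A := ∫⁻ z, Hn n z ^ 2 with hA
    by_cases h0 : A = 0
    · rw [h0]; exact bot_le
    have h2 : nrm (Hn n) = A ^ (1 / 2 : ℝ) := rfl
    rw [h2] at h1
    have h3 : A = A ^ (1 / 2 : ℝ) * A ^ (1 / 2 : ℝ) := by
      rw [← ENNReal.rpow_add _ _ h0 (hfin n)]; norm_num
    have h4 : A ^ (1 / 2 : ℝ) ≤ D := by
      nth_rw 1 [h3] at h1
      refine (ENNReal.mul_le_mul_iff_left ?_ ?_).1 h1
      · simp [h0]
      · simpa using hfin n
    rw [h3, sq]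
    gcongr
  have key : ∫⁻ z, T z ^ 2 ≤ D ^ 2 := by
    have hmono : ∀ z, Monotone (fun n => Hn n z ^ 2) := by
      intro z n m hnm
      dsimp only
      gcongr
      refine Set.indicator_apply_le' (fun hz => ?_) (fun _ => bot_le)
      have hz' : z ∈ S m := Metric.ball_subset_ball (by exact_mod_cast hnm) hz
      simp only [Hn, Set.indicator_of_mem hz']
      gcongr
    have hlim : ∀ z, Tendsto (fun n => Hn n z ^ 2) atTop (nhds (T z ^ 2)) := by
      intro z
      apply Tendsto.comp (ENNReal.continuous_pow 2).continuousAt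
      have e1 : Tendsto (fun n : ℕ => min (T z) (n : ℝ≥0∞)) atTop (nhds (T z)) := by
        have := (tendsto_const_nhds (x := T z)).min ENNReal.tendsto_nat_nhds_top
        simpa using this
      refine e1.congr' ?_
      filter_upwards [eventually_gt_atTop ⌈‖z‖⌉₊] with n hn
      have : z ∈ S n := by
        simp only [S, mem_ball_zero_iff]
        exact (Nat.le_ceil _).trans_lt (by exact_mod_cast hn)
      simp only [Hn, Set.indicator_of_mem this]
    have := lintegral_tendsto_of_tendsto_of_monotone (μ := (volume : Measure (ℝ × ℝ)))
      (fun n => ((hHm n).pow_const 2).aemeasurable)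
      (Eventually.of_forall hmono) (Eventually.of_forall hlim)
    exact le_of_tendsto' this hb
  unfold nrm
  calc _ ≤ (D ^ 2) ^ (1 / 2 : ℝ) := by gcongr
    _ = D := by
      rw [← ENNReal.rpow_natCast, ← ENNReal.rpow_mul]; norm_num

lemma tri0 (m S : ℝ × ℝ → ℝ × ℝ → ℝ≥0∞) (P : ℝ × ℝ → ℝ≥0∞) (K : ℝ≥0∞)
    (hm : Measurable (Function.uncurry m)) (hS : Measurable (Function.uncurry S))
    (hP : Measurable P) (hK : ∀ x, ∫⁻ y, m x y ^ 2 ≤ K) :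
    ∫⁻ x, ∫⁻ y, m x y * (P x * S x y) ≤
      K ^ (1 / 2 : ℝ) * (nrm P * (∫⁻ x, ∫⁻ y, S x y ^ 2) ^ (1 / 2 : ℝ)) := by
  have hm' : Measurable (fun q : (ℝ × ℝ) × (ℝ × ℝ) => m q.1 q.2) := hm
  have hS' : Measurable (fun q : (ℝ × ℝ) × (ℝ × ℝ) => S q.1 q.2) := hS
  have c1 := ENNReal.lintegral_mul_le_Lp_mul_Lq
    ((volume : Measure (ℝ × ℝ)).prod (volume : Measure (ℝ × ℝ))) Real.HolderConjugate.two_two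
    (f := fun q => m q.1 q.2 * P q.1) (g := fun q => S q.1 q.2)
    (by fun_prop) (by fun_prop)
  simp only [Pi.mul_apply, ENNReal.rpow_two] at c1
  rw [lintegral_prod _ (by fun_prop), lintegral_prod _ (by fun_prop),
    lintegral_prod _ (by fun_prop)] at c1
  have e1 : ∀ x y, m x y * (P x * S x y) = m x y * P x * S x y := fun x y => by ring
  simp only [e1]
  refine c1.trans ?_
  rw [← mul_assoc]
  gcongr
  unfold nrm
  rw [← ENNReal.mul_rpow_of_nonneg _ _ (by norm_num)]
  gcongr
  rw [← lintegral_const_mul _ (by fun_prop)]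
  apply lintegral_mono
  intro x
  dsimp only
  simp only [mul_pow]
  rw [lintegral_mul_const _ (by fun_prop)]
  gcongr
  exact hK x

lemma convS (F G : ℝ × ℝ → ℝ≥0∞) (hF : Measurable F) (hG : Measurable G) :
    (∫⁻ x, ∫⁻ y, (F (x - y) * G y) ^ 2) ^ (1 / 2 : ℝ) = nrm F * nrm G := by
  unfold nrm
  rw [← ENNReal.mul_rpow_of_nonneg _ _ (by norm_num)]
  congr 1
  rw [lintegral_lintegral_swap (by fun_prop), ← lintegral_const_mul _ (by fun_prop)]
  congr 1; ext y
  simp only [mul_pow]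
  rw [lintegral_mul_const _ (by fun_prop),
    lintegral_sub_right_eq_self (fun x => F x ^ 2) y]

lemma convS2 (F H : ℝ × ℝ → ℝ≥0∞) (hF : Measurable F) (hH : Measurable H) :
    (∫⁻ x, ∫⁻ y, (H y * F (y - x)) ^ 2) ^ (1 / 2 : ℝ) = nrm H * nrm F := by
  unfold nrm
  rw [← ENNReal.mul_rpow_of_nonneg _ _ (by norm_num)]
  congr 1
  rw [lintegral_lintegral_swap (by fun_prop), ← lintegral_mul_const _ (by fun_prop)]
  congr 1; ext y
  simp only [mul_pow]
  rw [lintegral_const_mul _ (by fun_prop),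
    lintegral_sub_left_eq_self (fun x => F x ^ 2) y]

lemma triA (m : ℝ × ℝ → ℝ × ℝ → ℝ≥0∞) (F G H : ℝ × ℝ → ℝ≥0∞) (K : ℝ≥0∞)
    (hm : Measurable (Function.uncurry m)) (hF : Measurable F) (hG : Measurable G)
    (hH : Measurable H) (hK : ∀ z, ∫⁻ z1, m z z1 ^ 2 ≤ K) :
    ∫⁻ z, ∫⁻ z1, m z z1 * (H z * (F (z - z1) * G z1)) ≤
      K ^ (1 / 2 : ℝ) * (nrm H * (nrm F * nrm G)) := by
  have := tri0 m (fun z z1 => F (z - z1) * G z1) H K hm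
    (by unfold Function.uncurry; fun_prop) hH hK
  rwa [convS F G hF hG] at this

lemma triB (m : ℝ × ℝ → ℝ × ℝ → ℝ≥0∞) (F G H : ℝ × ℝ → ℝ≥0∞) (K : ℝ≥0∞)
    (hm : Measurable (Function.uncurry m)) (hF : Measurable F) (hG : Measurable G)
    (hH : Measurable H) (hK : ∀ z1, ∫⁻ z, m z z1 ^ 2 ≤ K) :
    ∫⁻ z, ∫⁻ z1, m z z1 * (H z * (F (z - z1) * G z1)) ≤
      K ^ (1 / 2 : ℝ) * (nrm H * (nrm F * nrm G)) := by
  have hm' : Measurable (fun q : (ℝ × ℝ) × (ℝ × ℝ) => m q.1 q.2) := hm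
  have hm2 : Measurable (fun q : (ℝ × ℝ) × (ℝ × ℝ) => m q.2 q.1) := hm'.comp measurable_swap
  have := tri0 (fun z1 z => m z z1) (fun z1 z => H z * F (z - z1)) G K hm2
    (by unfold Function.uncurry; fun_prop) hG hK
  rw [convS2 F H hF hH] at this
  rw [lintegral_lintegral_swap (by unfold Function.uncurry; fun_prop)]
  convert this using 1
  · congr 1; ext y; congr 1; ext z; ring
  · ring

lemma triC (m : ℝ × ℝ → ℝ × ℝ → ℝ≥0∞) (F G H : ℝ × ℝ → ℝ≥0∞) (K : ℝ≥0∞)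
    (hm : Measurable (Function.uncurry m)) (hF : Measurable F) (hG : Measurable G)
    (hH : Measurable H) (hK : ∀ z2, ∫⁻ z, m z (z - z2) ^ 2 ≤ K) :
    ∫⁻ z, ∫⁻ z1, m z z1 * (H z * (F (z - z1) * G z1)) ≤
      K ^ (1 / 2 : ℝ) * (nrm H * (nrm F * nrm G)) := by
  have hm' : Measurable (fun q : (ℝ × ℝ) × (ℝ × ℝ) => m q.1 q.2) := hm
  have hm2 : Measurable (fun q : (ℝ × ℝ) × (ℝ × ℝ) => m q.1 (q.1 - q.2)) :=
    hm'.comp (by fun_prop : Measurable fun q : (ℝ × ℝ) × (ℝ × ℝ) => (q.1, q.1 - q.2))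
  have := triB (fun z z2 => m z (z - z2)) G F H K hm2 hG hF hH hK
  rw [mul_comm (nrm F)]
  refine le_trans (le_of_eq ?_) this
  congr 1; ext z
  rw [← lintegral_sub_left_eq_self _ z]
  congr 1; ext z1
  rw [sub_sub_cancel]; ring

lemma swap_aux (A B q b : ℝ) (hA : 1 ≤ A) (hAB : A ≤ B) (hqb : q ≤ b) :
    A ^ (-q) * B ^ (-b) ≤ B ^ (-q) * A ^ (-b) := by
  have hA0 : 0 < A := by linarith
  have hB0 : 0 < B := by linarith
  have e1 : A ^ (-q) = A ^ (b - q) * A ^ (-b) := by rw [← Real.rpow_add hA0]; congr 1; ring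
  have e2 : B ^ (-q) = B ^ (b - q) * B ^ (-b) := by rw [← Real.rpow_add hB0]; congr 1; ring
  have h : A ^ (b - q) ≤ B ^ (b - q) := Real.rpow_le_rpow hA0.le hAB (by linarith)
  have : 0 ≤ A ^ (-b) * B ^ (-b) := by positivity
  rw [e1, e2]
  nlinarith [mul_le_mul_of_nonneg_right h this]

lemma swap3 (A B C q b : ℝ) (hA : 1 ≤ A) (hB : 1 ≤ B) (hC : 1 ≤ C) (hqb : q ≤ b) :
    ∃ L : ℝ, 1 ≤ L ∧ A + B + C ≤ 3 * L ∧ A ^ (-q) * (B ^ (-b) * C ^ (-b)) ≤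
      L ^ (-q) * (B ^ (-b) * C ^ (-b) + A ^ (-b) * C ^ (-b) + A ^ (-b) * B ^ (-b)) := by
  have a0 : 0 ≤ A ^ (-b) := by positivity
  have b0 : 0 ≤ B ^ (-b) := by positivity
  have c0 : 0 ≤ C ^ (-b) := by positivity
  by_cases h1 : B ≤ A ∧ C ≤ A
  · refine ⟨A, hA, by linarith, ?_⟩
    have : 0 ≤ A ^ (-q) := by positivity
    gcongr
    have : 0 ≤ A ^ (-b) * C ^ (-b) + A ^ (-b) * B ^ (-b) := by positivity
    linarith
  by_cases h2 : A ≤ B ∧ C ≤ B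
  · refine ⟨B, hB, by linarith, ?_⟩
    have h := mul_le_mul_of_nonneg_right (swap_aux A B q b hA h2.1 hqb) c0
    have : 0 ≤ B ^ (-q) * (B ^ (-b) * C ^ (-b) + A ^ (-b) * B ^ (-b)) := by positivity
    nlinarith
  · have h3 : A ≤ C ∧ B ≤ C := by
      rw [not_and_or, not_le, not_le] at h1 h2
      constructor
      · by_contra h; push Not at h; rcases h1 with h1 | h1 <;> rcases h2 with h2 | h2 <;> linarith
      · by_contra h; push Not at h; rcases h1 with h1 | h1 <;> rcases h2 with h2 | h2 <;> linarith
    refine ⟨C, hC, by linarith, ?_⟩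
    have h := mul_le_mul_of_nonneg_right (swap_aux A C q b hA h3.1 hqb) b0
    have : 0 ≤ C ^ (-q) * (B ^ (-b) * C ^ (-b) + A ^ (-b) * C ^ (-b)) := by positivity
    nlinarith

lemma L_lower (c0 ξ x L : ℝ) (hc : 0 < c0) (hL : 3 + c0 * (|x| * (ξ ^ 2 + x ^ 2)) ≤ 3 * L) :
    1 / (3 * (1 + 15 / c0)) * (|x| * (1 + |x| + |ξ - x|) ^ 2) ≤ L := by
  have hx := abs_nonneg x
  have hξ := abs_nonneg ξ
  have h1 : 1 + |x| + |ξ - x| ≤ 1 + 2 * |x| + |ξ| := by linarith [abs_sub ξ x]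
  have h2 : (1 + |x| + |ξ - x|) ^ 2 ≤ 3 * (1 + 4 * x ^ 2 + ξ ^ 2) := by
    calc _ ≤ (1 + 2 * |x| + |ξ|) ^ 2 := by gcongr
      _ ≤ _ := by
        rw [← sq_abs x, ← sq_abs ξ]
        nlinarith [sq_nonneg (1 - 2 * |x|), sq_nonneg (1 - |ξ|), sq_nonneg (2 * |x| - |ξ|)]
  set Y := |x| * (ξ ^ 2 + x ^ 2) with hY
  have hY0 : 0 ≤ Y := by positivity
  have h3 : |x| ≤ 1 + Y := by
    have : |x| * x ^ 2 ≤ Y := by rw [hY]; gcongr; nlinarith [sq_nonneg ξ]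
    rw [← sq_abs] at this
    nlinarith [mul_nonneg hx (sq_nonneg (|x| - 1)), sq_nonneg (|x| - 1)]
  have h4 : |x| * (1 + |x| + |ξ - x|) ^ 2 ≤ 3 + 15 * Y := by
    calc _ ≤ |x| * (3 * (1 + 4 * x ^ 2 + ξ ^ 2)) := by gcongr
      _ = 3 * |x| + 12 * (|x| * x ^ 2) + 3 * (|x| * ξ ^ 2) := by ring
      _ ≤ _ := by
        have : 0 ≤ |x| * ξ ^ 2 := by positivity
        rw [hY] at h3 ⊢; nlinarith
  have h5 : 3 + 15 * Y ≤ (1 + 15 / c0) * (3 + c0 * Y) := by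
    have : (1 + 15 / c0) * (3 + c0 * Y) = 3 + 15 * Y + 45 / c0 + c0 * Y := by field_simp; ring
    rw [this]
    have : 0 ≤ 45 / c0 + c0 * Y := by positivity
    linarith
  have hp : 0 < 1 + 15 / c0 := by positivity
  rw [one_div, inv_mul_le_iff₀ (by positivity)]
  have := mul_le_mul_of_nonneg_left hL hp.le
  linarith

lemma lx_bound (c L X N δ : ℝ) (hc : 0 < c) (hX : 0 ≤ X) (hN : 1 ≤ N) (hXN : X ≤ N)
    (hδ : 0 ≤ δ) (hδ' : δ ≤ 1 / 2) (h : c * (X * N ^ 2) ≤ L) :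
    L ^ (-(1 / 2 - δ)) * X ≤ c ^ (-(1 / 2 - δ)) * (√X * N ^ (-1 + 3 * δ)) := by
  rcases hX.eq_or_lt with h0 | h0
  · rw [← h0]; simp
  have hN0 : 0 < N := by linarith
  have h1 : L ^ (-(1 / 2 - δ)) ≤ (c * (X * N ^ 2)) ^ (-(1 / 2 - δ)) :=
    Real.rpow_le_rpow_of_nonpos (by positivity) h (by linarith)
  have h2 : (c * (X * N ^ 2)) ^ (-(1 / 2 - δ)) =
      c ^ (-(1 / 2 - δ)) * (X ^ (-(1 / 2 - δ)) * N ^ (-1 + 2 * δ)) := by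
    rw [Real.mul_rpow hc.le (by positivity), Real.mul_rpow hX (by positivity),
      ← Real.rpow_natCast N 2, ← Real.rpow_mul hN0.le]
    congr 3; push_cast; ring
  calc _ ≤ (c ^ (-(1 / 2 - δ)) * (X ^ (-(1 / 2 - δ)) * N ^ (-1 + 2 * δ))) * X := by
        rw [← h2]; gcongr
    _ = c ^ (-(1 / 2 - δ)) * (√X * (X ^ δ * N ^ (-1 + 2 * δ))) := by
        have : √X * X ^ δ = X ^ (-(1 / 2 - δ)) * X := by
          rw [Real.sqrt_eq_rpow, ← Real.rpow_add h0, ← Real.rpow_add_one h0.ne']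
          congr 1; ring
        linear_combination (- c ^ (-(1 / 2 - δ)) * N ^ (-1 + 2 * δ)) * this
    _ ≤ c ^ (-(1 / 2 - δ)) * (√X * (N ^ δ * N ^ (-1 + 2 * δ))) := by gcongr
    _ = _ := by rw [← Real.rpow_add hN0]; congr 3; ring

lemma freq_bound (M N P Q ρ δ : ℝ) (hM : 1 ≤ M) (hMN : M ≤ N) (hP : 1 ≤ P) (hQ : 1 ≤ Q)
    (hPN : P ≤ N) (hQN : Q ≤ N) (hρ : 0 ≤ ρ) (hδ : 3 * δ = 3 / 4 - ρ) (hδ0 : 0 ≤ δ) :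
    N ^ (-1 + 3 * δ) * (P ^ ρ * Q ^ ρ * M ^ (-ρ)) ≤ √N * M ^ (-(3 / 4) : ℝ) := by
  have hM0 : 0 < M := by linarith
  have hN0 : 0 < N := by linarith
  calc _ ≤ N ^ (-1 + 3 * δ) * (N ^ ρ * N ^ ρ * M ^ (-ρ)) := by gcongr
    _ = √N * (N ^ (ρ - 3 / 4) * M ^ (-ρ)) := by
      rw [Real.sqrt_eq_rpow, ← mul_assoc, ← mul_assoc, ← mul_assoc, ← Real.rpow_add hN0,
        ← Real.rpow_add hN0, ← Real.rpow_add hN0]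
      congr 2; linarith
    _ ≤ √N * (M ^ (ρ - 3 / 4) * M ^ (-ρ)) := by
      have := Real.rpow_le_rpow_of_nonpos hM0 hMN (show ρ - 3 / 4 ≤ 0 by linarith)
      gcongr
    _ = _ := by rw [← Real.rpow_add hM0]; congr 2; ring

lemma sqrt_Vw (ξ x : ℝ) :
    √(Vw ξ x) = √|x| * (√(1 + |x| + |ξ - x|) * (1 + |ξ|) ^ (-(3 / 4) : ℝ)) := by
  unfold Vw
  have h0 : 0 < 1 + |ξ| := by positivity
  rw [Real.sqrt_div (by positivity), Real.sqrt_mul (abs_nonneg _), mul_div_assoc, div_eq_mul_inv]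
  congr 2
  rw [Real.sqrt_eq_rpow, Real.sqrt_eq_rpow, ← Real.rpow_natCast, ← Real.rpow_mul h0.le,
    ← Real.rpow_mul h0.le, ← Real.rpow_neg h0.le]
  norm_num

noncomputable def ww (b y : ℝ) : ℝ := (1 + |y|) ^ (-b)

set_option maxHeartbeats 2000000 in
lemma pointwise (a₁ a₂ : ℝ) (ha₁ : a₁ ≠ 0) (hratio : a₂ / a₁ < 0 ∨ 4 < a₂ / a₁)
    (s ρ δ b : ℝ) (hρ : 0 ≤ ρ) (hsρ : 0 ≤ s + ρ) (hδ : 3 * δ = 3 / 4 - ρ) (hδ0 : 0 ≤ δ)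
    (hb : 1 / 2 - δ ≤ b) :
    ∃ C : ℝ, 0 < C ∧ ∀ σ : ℝ, 0 ≤ σ → ∀ e : ℝ, e ≤ -(1 / 2 - δ) → ∀ τ ξ τ1 ξ1 : ℝ,
      Real.exp (σ * |ξ|) * (1 + |ξ|) ^ s * (1 + |τ - a₂ * ξ ^ 3|) ^ e * |ξ1| ≤
      C * (√(Vw ξ ξ1) * (ww b (τ1 - a₁ * ξ1 ^ 3) * ww b ((τ - τ1) - a₂ * (ξ - ξ1) ^ 3) +
          ww b (τ - a₂ * ξ ^ 3) * ww b ((τ - τ1) - a₂ * (ξ - ξ1) ^ 3) +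
          ww b (τ - a₂ * ξ ^ 3) * ww b (τ1 - a₁ * ξ1 ^ 3))) *
        ((Real.exp (σ * |ξ - ξ1|) * (1 + |ξ - ξ1|) ^ s *
            (1 + |(τ - τ1) - a₂ * (ξ - ξ1) ^ 3|) ^ b) *
          (Real.exp (σ * |ξ1|) * (1 + |ξ1|) ^ s * (1 + |τ1 - a₁ * ξ1 ^ 3|) ^ b)) := by
  obtain ⟨c0, hc0, hres⟩ := resonance a₁ a₂ ha₁ hratio
  set c := 1 / (3 * (1 + 15 / c0)) with hc
  have hcpos : 0 < c := by positivity
  refine ⟨c ^ (-(1 / 2 - δ)), by positivity, ?_⟩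
  intro σ hσ e he τ ξ τ1 ξ1
  have hδ' : δ ≤ 1 / 2 := by linarith
  have hres' := hres ξ ξ1
  have hH : a₂ * ξ ^ 3 - a₁ * ξ1 ^ 3 - a₂ * (ξ - ξ1) ^ 3 = (τ1 - a₁ * ξ1 ^ 3) +
      ((τ - τ1) - a₂ * (ξ - ξ1) ^ 3) - (τ - a₂ * ξ ^ 3) := by ring
  rw [hH] at hres'
  rw [sqrt_Vw]
  unfold ww
  generalize τ - a₂ * ξ ^ 3 = s0 at *
  generalize τ1 - a₁ * ξ1 ^ 3 = s1 at *
  generalize (τ - τ1) - a₂ * (ξ - ξ1) ^ 3 = s2 at *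
  have hs : |s1 + s2 - s0| ≤ |s1| + |s2| + |s0| := by
    have h1 := abs_sub (s1 + s2) s0
    have h2 := abs_add_le s1 s2
    linarith
  have p0 := abs_nonneg s0
  have p1 := abs_nonneg s1
  have p2 := abs_nonneg s2
  have px := abs_nonneg ξ1
  have py := abs_nonneg (ξ - ξ1)
  have pz := abs_nonneg ξ
  have htri : |ξ| ≤ |ξ - ξ1| + |ξ1| := by simpa using abs_add_le (ξ - ξ1) ξ1
  obtain ⟨L, hL1, hL3, hL⟩ := swap3 (1 + |s0|) (1 + |s1|) (1 + |s2|) (1 / 2 - δ) b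
    (by linarith) (by linarith) (by linarith) hb
  have hLl := L_lower c0 ξ ξ1 L hc0 (by linarith)
  rw [← hc] at hLl
  set N := 1 + |ξ1| + |ξ - ξ1| with hN
  have hlx := lx_bound c L |ξ1| N δ hcpos px (by linarith) (by linarith) hδ0 hδ' hLl
  have hfr := freq_bound (1 + |ξ|) N (1 + |ξ1|) (1 + |ξ - ξ1|) ρ δ (by linarith) (by linarith)
    (by linarith) (by linarith) (by linarith) (by linarith) hρ hδ hδ0
  have hA : (1 + |s0|) ^ e ≤ (1 + |s0|) ^ (-(1 / 2 - δ)) :=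
    Real.rpow_le_rpow_of_exponent_le (by linarith) he
  have hexp : Real.exp (σ * |ξ|) ≤ Real.exp (σ * |ξ - ξ1|) * Real.exp (σ * |ξ1|) := by
    rw [← Real.exp_add]
    apply Real.exp_le_exp.2
    nlinarith
  have hMpos : 0 < 1 + |ξ| := by linarith
  have hPpos : 0 < 1 + |ξ1| := by linarith
  have hQpos : 0 < 1 + |ξ - ξ1| := by linarith
  have hMs : (1 + |ξ|) ^ s ≤ (1 + |ξ1|) ^ s * (1 + |ξ - ξ1|) ^ s *
      ((1 + |ξ1|) ^ ρ * (1 + |ξ - ξ1|) ^ ρ * (1 + |ξ|) ^ (-ρ)) := by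
    have h1 : (1 + |ξ|) ^ (s + ρ) ≤ ((1 + |ξ1|) * (1 + |ξ - ξ1|)) ^ (s + ρ) := by
      apply Real.rpow_le_rpow hMpos.le _ hsρ
      nlinarith
    rw [Real.mul_rpow hPpos.le hQpos.le, Real.rpow_add hPpos, Real.rpow_add hQpos] at h1
    calc (1 + |ξ|) ^ s = (1 + |ξ|) ^ (s + ρ) * (1 + |ξ|) ^ (-ρ) := by
          rw [← Real.rpow_add hMpos]; congr 1; ring
      _ ≤ _ := by
          refine (mul_le_mul_of_nonneg_right h1 (by positivity)).trans (le_of_eq ?_)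
          ring
  have hB : (1 + |s1|) ^ (-b) * (1 + |s1|) ^ b = 1 := by
    rw [← Real.rpow_add (by positivity)]; simp
  have hC : (1 + |s2|) ^ (-b) * (1 + |s2|) ^ b = 1 := by
    rw [← Real.rpow_add (by positivity)]; simp
  have hLpos : 0 < L := by linarith
  have hNpos : 0 < N := by linarith
  set W := (1 + |s1|) ^ (-b) * (1 + |s2|) ^ (-b) + (1 + |s0|) ^ (-b) * (1 + |s2|) ^ (-b) +
    (1 + |s0|) ^ (-b) * (1 + |s1|) ^ (-b) with hW
  have hW0 : 0 ≤ W := by positivity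
  set B' := (1 + |s1|) ^ b
  set C' := (1 + |s2|) ^ b
  have hB0 : 0 ≤ B' := by positivity
  have hC0 : 0 ≤ C' := by positivity
  set R := (1 + |ξ1|) ^ ρ * (1 + |ξ - ξ1|) ^ ρ * (1 + |ξ|) ^ (-ρ)
  have hR0 : 0 ≤ R := by positivity
  set Ps := (1 + |ξ1|) ^ s
  set Qs := (1 + |ξ - ξ1|) ^ s
  have hPs0 : 0 ≤ Ps := by positivity
  have hQs0 : 0 ≤ Qs := by positivity
  set e1 := Real.exp (σ * |ξ - ξ1|)
  set e2 := Real.exp (σ * |ξ1|)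
  have he1 : 0 ≤ e1 := by positivity
  have he2 : 0 ≤ e2 := by positivity
  have hA2 : (1 + |s0|) ^ (-(1 / 2 - δ)) ≤ L ^ (-(1 / 2 - δ)) * W * (B' * C') := by
    calc (1 + |s0|) ^ (-(1 / 2 - δ)) = (1 + |s0|) ^ (-(1 / 2 - δ)) *
          ((1 + |s1|) ^ (-b) * (1 + |s2|) ^ (-b)) * (B' * C') := by
          linear_combination (-(1 + |s0|) ^ (-(1 / 2 - δ))) * (hB * ((1 + |s2|) ^ (-b) * C') + hC)
      _ ≤ _ := by gcongr
  calc _ ≤ (e1 * e2) * (Ps * Qs * R) * (L ^ (-(1 / 2 - δ)) * W * (B' * C')) * |ξ1| := by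
        gcongr
        exact hA.trans hA2
    _ = (e1 * e2 * (Ps * Qs) * (B' * C') * W) * R * (L ^ (-(1 / 2 - δ)) * |ξ1|) := by ring
    _ ≤ (e1 * e2 * (Ps * Qs) * (B' * C') * W) * R *
        (c ^ (-(1 / 2 - δ)) * (√|ξ1| * N ^ (-1 + 3 * δ))) := by gcongr
    _ = (e1 * e2 * (Ps * Qs) * (B' * C') * W) * c ^ (-(1 / 2 - δ)) * √|ξ1| *
        (N ^ (-1 + 3 * δ) * R) := by ring
    _ ≤ (e1 * e2 * (Ps * Qs) * (B' * C') * W) * c ^ (-(1 / 2 - δ)) * √|ξ1| *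
        (√N * (1 + |ξ|) ^ (-(3 / 4) : ℝ)) := by gcongr
    _ = _ := by ring

noncomputable def wt (a σ s b : ℝ) (z : ℝ × ℝ) : ℝ :=
  Real.exp (σ * |z.2|) * (1 + |z.2|) ^ s * (1 + |z.1 - a * z.2 ^ 3|) ^ b

lemma wt_nonneg (a σ s b : ℝ) (z : ℝ × ℝ) : 0 ≤ wt a σ s b z := by unfold wt; positivity

lemma wt_meas (a σ s b : ℝ) : Measurable (wt a σ s b) := by unfold wt; fun_prop

lemma ww_meas (b : ℝ) : Measurable (ww b) := by unfold ww; fun_prop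

lemma ww_nonneg (b y : ℝ) : 0 ≤ ww b y := by unfold ww; positivity

lemma ww_sq (b y : ℝ) : ENNReal.ofReal (ww b y) ^ 2 = jj b y := by
  unfold jj
  rw [← ENNReal.ofReal_pow (ww_nonneg b y)]
  congr 1
  unfold ww
  rw [← Real.rpow_natCast, ← Real.rpow_mul (by positivity)]
  congr 1; push_cast; ring

lemma integrand_eq (a σ s b : ℝ) (u : ℝ → ℝ → ℂ) (τ ξ : ℝ) :
    ENNReal.ofReal (Real.exp (2 * σ * |ξ|) * (1 + |ξ|) ^ (2 * s) *
        (1 + |τ - a * ξ ^ 3|) ^ (2 * b) * ‖FT2 u τ ξ‖ ^ 2) =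
      (ENNReal.ofReal (wt a σ s b (τ, ξ)) * ‖FT2 u τ ξ‖ₑ) ^ 2 := by
  rw [← ofReal_norm, ← ENNReal.ofReal_mul (wt_nonneg _ _ _ _ _),
    ← ENNReal.ofReal_pow (mul_nonneg (wt_nonneg _ _ _ _ _) (norm_nonneg _))]
  congr 1
  unfold wt
  have e1 : Real.exp (2 * σ * |ξ|) = Real.exp (σ * |ξ|) ^ 2 := by
    rw [← Real.exp_nat_mul]; congr 1; push_cast; ring
  have e2 : ∀ y t : ℝ, 0 ≤ y → y ^ (2 * t) = (y ^ t) ^ 2 := by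
    intro y t hy
    rw [← Real.rpow_natCast, ← Real.rpow_mul hy]; congr 1; push_cast; ring
  rw [e1, e2 _ _ (by positivity), e2 _ _ (by positivity)]
  ring

lemma XNorm_eq (a σ s b : ℝ) (u : ℝ → ℝ → ℂ)
    (hu : Continuous (fun p : ℝ × ℝ => FT2 u p.1 p.2)) :
    XNorm a σ s b u = nrm (fun z => ENNReal.ofReal (wt a σ s b z) * ‖FT2 u z.1 z.2‖ₑ) := by
  have hw := wt_meas a σ s b
  have hm := hu.measurable
  unfold XNorm nrm
  simp only [integrand_eq]
  rw [Measure.volume_eq_prod, lintegral_prod _ (by fun_prop)]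

lemma XNorm_le (a σ s b : ℝ) (u : ℝ → ℝ → ℂ) (T : ℝ × ℝ → ℝ≥0∞) (hT : Measurable T)
    (h : ∀ z, ENNReal.ofReal (wt a σ s b z) * ‖FT2 u z.1 z.2‖ₑ ≤ T z) :
    XNorm a σ s b u ≤ nrm T := by
  unfold XNorm nrm
  simp only [integrand_eq]
  rw [Measure.volume_eq_prod, lintegral_prod _ (by fun_prop)]
  gcongr with τ ξ
  exact h (τ, ξ)

/-- the three multipliers -/
noncomputable def mm (b : ℝ) (k l : ℝ × ℝ → ℝ × ℝ → ℝ) (z p : ℝ × ℝ) : ℝ≥0∞ :=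
  ENNReal.ofReal (√(Vw z.2 p.2)) * (ENNReal.ofReal (ww b (k z p)) * ENNReal.ofReal (ww b (l z p)))

lemma mm_sq (b : ℝ) (k l : ℝ × ℝ → ℝ × ℝ → ℝ) (z p : ℝ × ℝ) :
    mm b k l z p ^ 2 = ENNReal.ofReal (Vw z.2 p.2) * (jj b (k z p) * jj b (l z p)) := by
  unfold mm
  rw [mul_pow, mul_pow, ww_sq, ww_sq, ← ENNReal.ofReal_pow (Real.sqrt_nonneg _),
    Real.sq_sqrt (Vw_nonneg _ _)]

lemma mm_meas (b : ℝ) (k l : ℝ × ℝ → ℝ × ℝ → ℝ) (hk : Measurable (Function.uncurry k))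
    (hl : Measurable (Function.uncurry l)) : Measurable (Function.uncurry (mm b k l)) := by
  have hk' : Measurable (fun q : (ℝ × ℝ) × (ℝ × ℝ) => k q.1 q.2) := hk
  have hl' : Measurable (fun q : (ℝ × ℝ) × (ℝ × ℝ) => l q.1 q.2) := hl
  have hw := ww_meas b
  have hV : Measurable (fun q : (ℝ × ℝ) × (ℝ × ℝ) => Vw q.1.2 q.2.2) :=
    Vw_meas.comp (by fun_prop : Measurable fun q : (ℝ × ℝ) × (ℝ × ℝ) => (q.1.2, q.2.2))
  unfold Function.uncurry mm
  fun_prop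

lemma bilin_abs (mA mB mC : ℝ × ℝ → ℝ × ℝ → ℝ≥0∞) (KA KB KC : ℝ≥0∞)
    (mAm : Measurable (Function.uncurry mA)) (mBm : Measurable (Function.uncurry mB))
    (mCm : Measurable (Function.uncurry mC))
    (hKA : ∀ z, ∫⁻ z1, mA z z1 ^ 2 ≤ KA) (hKB : ∀ z1, ∫⁻ z, mB z z1 ^ 2 ≤ KB)
    (hKC : ∀ z2, ∫⁻ z, mC z (z - z2) ^ 2 ≤ KC)
    (F G : ℝ × ℝ → ℝ≥0∞) (hF : Measurable F) (hG : Measurable G) :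
    Measurable (fun z => ∫⁻ p, (mA z p + mB z p + mC z p) * (F (z - p) * G p)) ∧
    nrm (fun z => ∫⁻ p, (mA z p + mB z p + mC z p) * (F (z - p) * G p)) ≤
      (KA ^ (1 / 2 : ℝ) + KB ^ (1 / 2 : ℝ) + KC ^ (1 / 2 : ℝ)) * (nrm F * nrm G) := by
  have mAm' : Measurable (fun q : (ℝ × ℝ) × (ℝ × ℝ) => mA q.1 q.2) := mAm
  have mBm' : Measurable (fun q : (ℝ × ℝ) × (ℝ × ℝ) => mB q.1 q.2) := mBm
  have mCm' : Measurable (fun q : (ℝ × ℝ) × (ℝ × ℝ) => mC q.1 q.2) := mCm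
  have hmeas : Measurable (fun z => ∫⁻ p, (mA z p + mB z p + mC z p) * (F (z - p) * G p)) := by
    apply Measurable.lintegral_prod_right' (f := fun q : (ℝ × ℝ) × (ℝ × ℝ) =>
      (mA q.1 q.2 + mB q.1 q.2 + mC q.1 q.2) * (F (q.1 - q.2) * G q.2))
    fun_prop
  refine ⟨hmeas, ?_⟩
  apply duality _ hmeas
  intro H hH
  have tA := triA mA F G H KA mAm hF hG hH hKA
  have tB := triB mB F G H KB mBm hF hG hH hKB
  have tC := triC mC F G H KC mCm hF hG hH hKC
  have e1 : ∀ z, (∫⁻ p, (mA z p + mB z p + mC z p) * (F (z - p) * G p)) * H z =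
      (∫⁻ p, mA z p * (H z * (F (z - p) * G p))) + (∫⁻ p, mB z p * (H z * (F (z - p) * G p))) +
      (∫⁻ p, mC z p * (H z * (F (z - p) * G p))) := by
    intro z
    have hA1 : Measurable (fun p => mA z p) := mAm'.comp (by fun_prop : Measurable fun p => (z, p))
    have hB1 : Measurable (fun p => mB z p) := mBm'.comp (by fun_prop : Measurable fun p => (z, p))
    have hC1 : Measurable (fun p => mC z p) := mCm'.comp (by fun_prop : Measurable fun p => (z, p))
    rw [← lintegral_mul_const _ (by fun_prop), ← lintegral_add_left (by fun_prop),
      ← lintegral_add_left (by fun_prop)]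
    congr 1; ext p
    ring
  simp only [e1]
  have hAi : Measurable (fun z => ∫⁻ p, mA z p * (H z * (F (z - p) * G p))) := by
    apply Measurable.lintegral_prod_right'
      (f := fun q : (ℝ × ℝ) × (ℝ × ℝ) => mA q.1 q.2 * (H q.1 * (F (q.1 - q.2) * G q.2)))
    fun_prop
  have hBi : Measurable (fun z => ∫⁻ p, mB z p * (H z * (F (z - p) * G p))) := by
    apply Measurable.lintegral_prod_right'
      (f := fun q : (ℝ × ℝ) × (ℝ × ℝ) => mB q.1 q.2 * (H q.1 * (F (q.1 - q.2) * G q.2)))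
    fun_prop
  rw [lintegral_add_left (by fun_prop), lintegral_add_left (by fun_prop)]
  refine (add_le_add (add_le_add tA tB) tC).trans (le_of_eq ?_)
  ring

lemma bilin (a₁ a₂ b : ℝ) (ha₁ : a₁ ≠ 0) (ha₂ : a₂ ≠ 0)
    (hratio : a₂ / a₁ < 0 ∨ 4 < a₂ / a₁) (hb : 1 / 2 < b) :
    ∃ K : ℝ≥0∞, K ≠ ⊤ ∧ ∃ m : ℝ × ℝ → ℝ × ℝ → ℝ≥0∞,
      (∀ τ ξ τ1 ξ1 : ℝ, m (τ, ξ) (τ1, ξ1) = ENNReal.ofReal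
        (√(Vw ξ ξ1) * (ww b (τ1 - a₁ * ξ1 ^ 3) * ww b ((τ - τ1) - a₂ * (ξ - ξ1) ^ 3) +
          ww b (τ - a₂ * ξ ^ 3) * ww b ((τ - τ1) - a₂ * (ξ - ξ1) ^ 3) +
          ww b (τ - a₂ * ξ ^ 3) * ww b (τ1 - a₁ * ξ1 ^ 3)))) ∧
      ∀ F G : ℝ × ℝ → ℝ≥0∞, Measurable F → Measurable G →
        Measurable (fun z => ∫⁻ p, m z p * (F (z - p) * G p)) ∧
        nrm (fun z => ∫⁻ p, m z p * (F (z - p) * G p)) ≤ K * (nrm F * nrm G) := by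
  obtain ⟨KA, hKA, HA⟩ := supA a₁ a₂ b ha₁ hratio hb
  obtain ⟨KB, hKB, HB⟩ := supB a₂ b ha₂ hb
  obtain ⟨KC, hKC, HC⟩ := supC a₁ a₂ b ha₁ hratio hb
  refine ⟨KA ^ (1 / 2 : ℝ) + KB ^ (1 / 2 : ℝ) + KC ^ (1 / 2 : ℝ), by finiteness,
    fun z p => mm b (fun _ p => p.1 - a₁ * p.2 ^ 3)
          (fun z p => (z.1 - p.1) - a₂ * (z.2 - p.2) ^ 3) z p +
        mm b (fun z _ => z.1 - a₂ * z.2 ^ 3)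
          (fun z p => (z.1 - p.1) - a₂ * (z.2 - p.2) ^ 3) z p +
        mm b (fun z _ => z.1 - a₂ * z.2 ^ 3) (fun _ p => p.1 - a₁ * p.2 ^ 3) z p, ?_, ?_⟩
  · intro τ ξ τ1 ξ1
    unfold mm
    have n1 := ww_nonneg b (τ1 - a₁ * ξ1 ^ 3)
    have n2 := ww_nonneg b (τ - τ1 - a₂ * (ξ - ξ1) ^ 3)
    have n0 := ww_nonneg b (τ - a₂ * ξ ^ 3)
    have nV := Real.sqrt_nonneg (Vw ξ ξ1)
    rw [ENNReal.ofReal_mul nV, ENNReal.ofReal_add (by positivity) (by positivity),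
      ENNReal.ofReal_add (by positivity) (by positivity),
      ENNReal.ofReal_mul n1, ENNReal.ofReal_mul n0, ENNReal.ofReal_mul n0]
    ring
  · intro F G hF hG
    refine bilin_abs _ _ _ KA KB KC ?_ ?_ ?_ ?_ ?_ ?_ F G hF hG
    · exact mm_meas _ _ _ (by unfold Function.uncurry; fun_prop) (by unfold Function.uncurry; fun_prop)
    · exact mm_meas _ _ _ (by unfold Function.uncurry; fun_prop) (by unfold Function.uncurry; fun_prop)
    · exact mm_meas _ _ _ (by unfold Function.uncurry; fun_prop) (by unfold Function.uncurry; fun_prop)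
    · intro z; simp only [mm_sq]; exact HA z
    · intro z; simp only [mm_sq]; exact HB z
    · intro z; simp only [mm_sq]; exact HC z

/-- Bilinear estimate (3.4): for `a₁, a₂ ≠ 0` with `a₂/a₁ < 0` or `a₂/a₁ > 4`,
and `s > −3/4`, there exist `b ∈ (1/2,1)`, `ε > 0` and `C > 0` such that for
all `σ ≥ 0`, all `b' ∈ [b, b+ε)` and all Schwartz `f, g`:
`‖f·∂_x g‖_{X_{a₂}^{σ,s,b'−1}} ≤ C ‖f‖_{X_{a₂}^{σ,s,b}} ‖g‖_{X_{a₁}^{σ,s,b}}`. -/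
theorem bilinear_nondiv_vu (a₁ a₂ s : ℝ) (ha₁ : a₁ ≠ 0) (ha₂ : a₂ ≠ 0)
    (hratio : a₂ / a₁ < 0 ∨ 4 < a₂ / a₁) (hs : -(3/4) < s) :
    ∃ b ∈ Set.Ioo (1/2 : ℝ) 1, ∃ ε : ℝ, 0 < ε ∧ ∃ C : ℝ, 0 < C ∧
      ∀ σ : ℝ, 0 ≤ σ → ∀ b' ∈ Set.Ico b (b + ε),
        ∀ f g : SchwartzMap (ℝ × ℝ) ℂ,
          XNorm a₂ σ s (b' - 1) (fun t x => f (t, x) * deriv (fun y => g (t, y)) x) ≤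
            ENNReal.ofReal C *
              (XNorm a₂ σ s b (fun t x => f (t, x)) * XNorm a₁ σ s b (fun t x => g (t, x))) := by
  set ρ := max (-s) 0 with hρd
  have hρ0 : 0 ≤ ρ := le_max_right _ _
  have hρs : -s ≤ ρ := le_max_left _ _
  have hρ : ρ < 3 / 4 := max_lt (by linarith) (by norm_num)
  set δ := (3 / 4 - ρ) / 3 with hδd
  have hδ : 3 * δ = 3 / 4 - ρ := by rw [hδd]; ring
  have hδ0 : 0 < δ := by linarith
  have hδ1 : δ ≤ 1 / 4 := by linarith
  set b := 1 / 2 + δ / 2 with hb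
  have hb1 : 1 / 2 < b := by linarith
  obtain ⟨C, hC, hpt⟩ := pointwise a₁ a₂ ha₁ hratio s ρ δ b hρ0 (by linarith) hδ hδ0.le (by linarith)
  obtain ⟨K, hK, m, hm, hbil⟩ := bilin a₁ a₂ b ha₁ ha₂ hratio hb1
  refine ⟨b, ⟨hb1, by linarith⟩, δ / 2, by linarith, C * K.toReal + 1, by positivity, ?_⟩
  intro σ hσ b' hb' f g
  rw [XNorm_eq _ _ _ _ _ (FT2_continuous f), XNorm_eq _ _ _ _ _ (FT2_continuous g)]
  set F : ℝ × ℝ → ℝ≥0∞ := fun z => ENNReal.ofReal (wt a₂ σ s b z) *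
    ‖FT2 (fun t x => f (t, x)) z.1 z.2‖ₑ with hF
  set G : ℝ × ℝ → ℝ≥0∞ := fun z => ENNReal.ofReal (wt a₁ σ s b z) *
    ‖FT2 (fun t x => g (t, x)) z.1 z.2‖ₑ with hG
  have hFm : Measurable F := by
    have h1 := (FT2_continuous f).measurable
    have h2 := wt_meas a₂ σ s b
    fun_prop
  have hGm : Measurable G := by
    have h1 := (FT2_continuous g).measurable
    have h2 := wt_meas a₁ σ s b
    fun_prop
  obtain ⟨hmeas, hmain⟩ := hbil (fun z => ENNReal.ofReal C * F z) G (by fun_prop) hGm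
  have hCF : nrm (fun z => ENNReal.ofReal C * F z) = ENNReal.ofReal C * nrm F := by
    unfold nrm
    simp only [mul_pow]
    rw [lintegral_const_mul _ (by fun_prop), ENNReal.mul_rpow_of_nonneg _ _ (by norm_num),
      ← ENNReal.rpow_natCast, ← ENNReal.rpow_mul]
    norm_num
  rw [hCF] at hmain
  have hfin : K * (ENNReal.ofReal C * nrm F * nrm G) ≤
      ENNReal.ofReal (C * K.toReal + 1) * (nrm F * nrm G) := by
    rw [show K * (ENNReal.ofReal C * nrm F * nrm G) = (ENNReal.ofReal C * K) * (nrm F * nrm G) by ring]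
    gcongr
    rw [← ENNReal.ofReal_toReal hK, ← ENNReal.ofReal_mul hC.le, ENNReal.toReal_ofReal (by positivity)]
    apply ENNReal.ofReal_le_ofReal; linarith
  refine le_trans ?_ (hmain.trans hfin)
  apply XNorm_le _ _ _ _ _ _ hmeas
  rintro ⟨τ, ξ⟩
  have hcv := FT2_conv f g τ ξ
  rw [ENNReal.ofReal_one, one_mul] at hcv
  refine (mul_le_mul_right hcv _).trans ?_
  rw [← lintegral_const_mul' _ _ ENNReal.ofReal_ne_top]
  apply lintegral_mono
  rintro ⟨τ1, ξ1⟩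
  dsimp only
  rw [hm]
  have hp := hpt σ hσ (b' - 1) (by linarith [hb'.2]) τ ξ τ1 ξ1
  generalize hX : √(Vw ξ ξ1) * _ = X at hp ⊢
  have hX0 : 0 ≤ X := by
    have n1 := ww_nonneg b (τ1 - a₁ * ξ1 ^ 3)
    have n2 := ww_nonneg b (τ - τ1 - a₂ * (ξ - ξ1) ^ 3)
    have n0 := ww_nonneg b (τ - a₂ * ξ ^ 3)
    rw [← hX]; positivity
  have hp1 : wt a₂ σ s (b' - 1) (τ, ξ) * |ξ1| ≤
      C * X * (wt a₂ σ s b (τ - τ1, ξ - ξ1) * wt a₁ σ s b (τ1, ξ1)) := hp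
  have hp2 := ENNReal.ofReal_le_ofReal hp1
  rw [ENNReal.ofReal_mul (wt_nonneg _ _ _ _ _), ENNReal.ofReal_mul (by positivity),
    ENNReal.ofReal_mul (wt_nonneg _ _ _ _ _), ENNReal.ofReal_mul hC.le] at hp2
  have hn : ‖ξ1‖ₑ = ENNReal.ofReal |ξ1| := by rw [← ofReal_norm, Real.norm_eq_abs]
  rw [hn]
  simp only [hF, hG, Prod.mk_sub_mk]
  generalize ‖FT2 (fun t x => f (t, x)) (τ - τ1) (ξ - ξ1)‖ₑ = u
  generalize ‖FT2 (fun t x => g (t, x)) τ1 ξ1‖ₑ = v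
  calc _ = (ENNReal.ofReal (wt a₂ σ s (b' - 1) (τ, ξ)) * ENNReal.ofReal |ξ1|) * (u * v) := by ring
    _ ≤ _ := mul_le_mul_left hp2 (u * v)
    _ = _ := by ring
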